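/- Let f(t,x;τ,ξ) be a polynomial of degree 2 in (τ,ξ) ∈ ℝ×ℝⁿ with real-analytic coefficients on an open set U ⊂ ℝ×ℝⁿ and homogeneous decomposition f = f₂+f₁+f₀. Let ψ be real-analytic with Σ = {(t,x)∈U : t=ψ(x)}, and assume for a nonzero constant a that 0 ≠ 1 − |∇ψ(x)|² = a·f₂(ψ(x),x;−1,∇ψ(x)) for all relevant x, and additionally that f₂(t,x;1,∇ψ(x)) = f₂(t,x;−1,∇ψ(x)) for all (t,x). Then there exist an open neighborhood Ω of Σ and a real-analytic function v on Ω such that u(t,x) = −a·log(ψ(x)−t) + v(t,x) is a real-analytic solution of u_tt − Δu = f(t,x;∂_t u,∇u) on Ω ∩ {t < ψ(x)}, the negative side of Σ; together with the solution on {t > ψ(x)}, there exist solutions on both sides of Σ whose singularities propagate along the noncharacteristic hypersurface Σ. -/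

import Mathlib

open Real Filter

/-- partial derivative in `t` of a function `u(t,x)` -/
noncomputable def ptd {n : ℕ} (u : ℝ → (Fin n → ℝ) → ℝ) (t : ℝ) (x : Fin n → ℝ) : ℝ :=
  deriv (fun s => u s x) t

/-- partial derivative in `x i` of a function `u(t,x)` -/
noncomputable def pxd {n : ℕ} (i : Fin n) (u : ℝ → (Fin n → ℝ) → ℝ) (t : ℝ)
    (x : Fin n → ℝ) : ℝ :=
  deriv (fun y => u t (Function.update x i y)) (x i)

/-- Laplacian in `x` of a function `u(t,x)` -/
noncomputable def lapx {n : ℕ} (u : ℝ → (Fin n → ℝ) → ℝ) (t : ℝ) (x : Fin n → ℝ) : ℝ :=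
  ∑ i, pxd i (pxd i u) t x

/-- gradient in `x` of a function `u(t,x)` -/
noncomputable def gradx {n : ℕ} (u : ℝ → (Fin n → ℝ) → ℝ) (t : ℝ) (x : Fin n → ℝ) :
    Fin n → ℝ :=
  fun i => pxd i u t x

/-- gradient of a function of `x` alone -/
noncomputable def gradp {n : ℕ} (ψ : (Fin n → ℝ) → ℝ) (x : Fin n → ℝ) : Fin n → ℝ :=
  fun i => deriv (fun y => ψ (Function.update x i y)) (x i)

/-- `g(t,x;τ,ξ)` is a polynomial homogeneous of degree `l` in `(τ,ξ) ∈ ℝ × ℝⁿ` whose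
coefficients are real-analytic functions of `(t,x)` on `U`. -/
def HomogPoly {n : ℕ} (l : ℕ) (U : Set (ℝ × (Fin n → ℝ)))
    (g : ℝ → (Fin n → ℝ) → ℝ → (Fin n → ℝ) → ℝ) : Prop :=
  ∃ c : (Fin l → Fin (n + 1)) → ℝ → (Fin n → ℝ) → ℝ,
    (∀ μ, AnalyticOnNhd ℝ (fun p : ℝ × (Fin n → ℝ) => c μ p.1 p.2) U) ∧
    ∀ t x τ ξ, g t x τ ξ =
      ∑ μ : Fin l → Fin (n + 1), c μ t x * ∏ k, (Fin.cons τ ξ : Fin (n + 1) → ℝ) (μ k)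

/-- `u` solves the nonlinear wave equation `u_tt - Δu = f₂ + f₁ + f₀ (t,x; ∂_t u, ∇u)`
at every point of `S`. -/
def SolvesWave {n : ℕ} (f₂ f₁ f₀ : ℝ → (Fin n → ℝ) → ℝ → (Fin n → ℝ) → ℝ)
    (u : ℝ → (Fin n → ℝ) → ℝ) (S : Set (ℝ × (Fin n → ℝ))) : Prop :=
  ∀ t x, (t, x) ∈ S →
    ptd (ptd u) t x - lapx u t x =
      f₂ t x (ptd u t x) (gradx u t x) + f₁ t x (ptd u t x) (gradx u t x)
        + f₀ t x (ptd u t x) (gradx u t x)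

/-!
In the coordinates `(s, x)` with `s = t - ψ x`, the ansatz `u = -a log |s| + W` produces terms of
order `s⁻²` with coefficient `a (1 - |∇ψ|²) - a² f₂(1, -∇ψ)`. This coefficient vanishes on `s = 0`
by the assumption on `f₂`, so it is divisible by `s`, and the wave equation becomes the Fuchsian
equation `s Wₛₛ + 2 Wₛ = s H(W) + Q(W)`, where `H(W)` contains at most one normal derivative of `W`
in each factor and `Q(W)` contains none. Writing `W = ∑ sᵏ Gₖ(x) / k!`, the `k`-th normal
derivative of the equation reads `(k + 2) Gₖ₊₁ = …` with a right-hand side that depends only on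
`G₀, …, Gₖ`, so the `Gₖ` are determined by `G₀ = 0`. The bounds
`‖Dʲ Gₖ‖ ≤ M lᵏ ρᵏ⁺ʲ (k + j)! / (k + j + 1)²` are preserved by this recursion: products lose only
a constant because `1 / (N + 1)²` is stable under convolution, and derivatives are paid for by the
factor `k + 2`. Hence the series converges to an analytic function, which solves the equation
because all normal derivatives of the two sides agree on `s = 0`. Since `log |s|` and the equation
do not distinguish the sides of `s = 0`, the same `W` serves on both.
-/

open scoped Topology Nat ContDiff
open Finset.HasAntidiagonal

section BinomialConvolution

/-- The binomial convolution `∑ (k choose i) aᵢ bₖ₋ᵢ` of two sequences, which expresses the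
Leibniz rule: the derivatives of a product are the binomial convolution of the derivatives. -/
def binomConv {R : Type*} [Semiring R] (a b : ℕ → R) (k : ℕ) : R :=
  ∑ ij ∈ antidiagonal k, k.choose ij.1 * (a ij.1 * b ij.2)

theorem sum_antidiagonal_choose_symm_mul {R : Type*} [Semiring R] (k : ℕ) (F : ℕ → ℕ → R) :
    ∑ ij ∈ antidiagonal k, k.choose ij.2 * F ij.1 ij.2 =
      ∑ ij ∈ antidiagonal k, k.choose ij.1 * F ij.1 ij.2 :=
  Finset.sum_congr rfl fun ij hij => by
    rw [Nat.choose_symm_of_eq_add (mem_antidiagonal.1 hij).symm]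

theorem binomConv_succ {R : Type*} [Semiring R] (a b : ℕ → R) (k : ℕ) :
    binomConv a b (k + 1) =
      binomConv a (fun j => b (j + 1)) k + binomConv (fun i => a (i + 1)) b k := by
  rw [binomConv, Finset.sum_antidiagonal_choose_succ_mul (fun i j => a i * b j),
    sum_antidiagonal_choose_symm_mul k fun i j => a (i + 1) * b j]
  rfl

theorem sum_choose_mul_sum_choose_mul {R : Type*} [Semiring R]
    (k m : ℕ) (F : ℕ → ℕ → R) :
    ∑ ij ∈ antidiagonal k, k.choose ij.1 *
        ∑ pq ∈ antidiagonal m, m.choose pq.1 * F (ij.1 + pq.1) (ij.2 + pq.2) =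
      ∑ ij ∈ antidiagonal (k + m), (k + m).choose ij.1 * F ij.1 ij.2 := by
  induction k generalizing F with
  | zero => simp
  | succ k ih =>
    rw [Finset.sum_antidiagonal_choose_succ_mul (fun i j => ∑ pq ∈ antidiagonal m,
        m.choose pq.1 * F (i + pq.1) (j + pq.2)),
      Nat.add_right_comm, Finset.sum_antidiagonal_choose_succ_mul F,
      sum_antidiagonal_choose_symm_mul k fun i j => ∑ pq ∈ antidiagonal m,
        m.choose pq.1 * F (i + 1 + pq.1) (j + pq.2),
      sum_antidiagonal_choose_symm_mul (k + m) fun i j => F (i + 1) j,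
      ← ih fun i j => F i (j + 1), ← ih fun i j => F (i + 1) j]
    simp only [Nat.add_right_comm]

theorem binomConv_nonneg {a b : ℕ → ℝ} (ha : ∀ i, 0 ≤ a i) (hb : ∀ j, 0 ≤ b j) (k : ℕ) :
    0 ≤ binomConv a b k :=
  Finset.sum_nonneg fun ij _ =>
    mul_nonneg (Nat.cast_nonneg _) (mul_nonneg (ha ij.1) (hb ij.2))

theorem binomConv_le_mul_binomConv {a b α β : ℕ → ℝ} {r s : ℝ} (ha : ∀ i, 0 ≤ a i)
    (hb : ∀ j, 0 ≤ b j) (haα : ∀ i, a i ≤ r * α i) (hbβ : ∀ j, b j ≤ s * β j) (k : ℕ) :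
    binomConv a b k ≤ r * s * binomConv α β k := by
  rw [binomConv, binomConv, Finset.mul_sum]
  refine Finset.sum_le_sum fun ij _ => ?_
  calc k.choose ij.1 * (a ij.1 * b ij.2)
      ≤ k.choose ij.1 * ((r * α ij.1) * (s * β ij.2)) := by
        gcongr
        exacts [hb _, (ha _).trans (haα _), haα _, hbβ _]
    _ = r * s * (k.choose ij.1 * (α ij.1 * β ij.2)) := by ring

theorem binomConv_shift_le {a b : ℕ → ℝ} (ha : ∀ i, 0 ≤ a i) (hb : ∀ j, 0 ≤ b j) (p q k : ℕ) :
    binomConv (fun i => a (i + p)) (fun j => b (j + q)) k ≤ binomConv a b (k + (p + q)) := by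
  induction p generalizing a with
  | zero =>
    induction q generalizing b with
    | zero => rfl
    | succ q ih =>
      calc binomConv (fun i => a (i + 0)) (fun j => b (j + (q + 1))) k
          ≤ binomConv a (fun j => b (j + 1)) (k + (0 + q)) := ih (fun j => hb (j + 1))
        _ ≤ binomConv a b (k + (0 + (q + 1))) := by
          rw [← add_assoc 0 q 1, ← add_assoc k (0 + q) 1, binomConv_succ]
          exact le_add_of_nonneg_right (binomConv_nonneg (fun i => ha (i + 1)) hb _)
  | succ p ih =>
    calc binomConv (fun i => a (i + (p + 1))) (fun j => b (j + q)) k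
        ≤ binomConv (fun i => a (i + 1)) b (k + (p + q)) := ih (fun i => ha (i + 1))
      _ ≤ binomConv a b (k + (p + 1 + q)) := by
        rw [Nat.add_right_comm p, ← add_assoc k (p + q) 1, binomConv_succ]
        exact le_add_of_nonneg_left (binomConv_nonneg ha (fun j => hb (j + 1)) _)

end BinomialConvolution

section Majorant

theorem sum_range_one_div_succ_sq_le (N : ℕ) :
    ∑ i ∈ Finset.range (N + 1), 1 / ((i : ℝ) + 1) ^ 2 ≤ 2 - 1 / ((N : ℝ) + 1) := by
  induction N with
  | zero => norm_num
  | succ N ih =>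
    have telescope : 1 / ((N : ℝ) + 1 + 1) ^ 2 ≤ 1 / ((N : ℝ) + 1) - 1 / ((N : ℝ) + 1 + 1) := by
      rw [div_sub_div _ _ (by positivity) (by positivity),
        div_le_div_iff₀ (by positivity) (by positivity)]
      nlinarith [(Nat.cast_nonneg N : (0 : ℝ) ≤ N)]
    rw [Finset.sum_range_succ]
    push_cast
    linarith

theorem one_div_sq_mul_one_div_sq_le {x y : ℝ} (hx : 0 ≤ x) (hy : 0 ≤ y) :
    1 / (x + 1) ^ 2 * (1 / (y + 1) ^ 2) ≤
      2 / (x + y + 1) ^ 2 * (1 / (x + 1) ^ 2 + 1 / (y + 1) ^ 2) := by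
  rw [div_add_div _ _ (by positivity) (by positivity), div_mul_div_comm, div_mul_div_comm,
    div_le_div_iff₀ (by positivity) (by positivity)]
  have hsq : (x + y + 1) ^ 2 ≤ 2 * ((y + 1) ^ 2 + (x + 1) ^ 2) := by
    nlinarith [sq_nonneg (x - y)]
  calc 1 * 1 * ((x + y + 1) ^ 2 * ((x + 1) ^ 2 * (y + 1) ^ 2))
      = (x + y + 1) ^ 2 * ((x + 1) ^ 2 * (y + 1) ^ 2) := by ring
    _ ≤ 2 * ((y + 1) ^ 2 + (x + 1) ^ 2) * ((x + 1) ^ 2 * (y + 1) ^ 2) := by gcongr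
    _ = 2 * (1 * (y + 1) ^ 2 + (x + 1) ^ 2 * 1) * ((x + 1) ^ 2 * (y + 1) ^ 2) := by ring

theorem sum_antidiagonal_one_div_sq_mul_le (N : ℕ) :
    ∑ ij ∈ antidiagonal N, 1 / ((ij.1 : ℝ) + 1) ^ 2 * (1 / ((ij.2 : ℝ) + 1) ^ 2) ≤
      8 / ((N : ℝ) + 1) ^ 2 := by
  have hfst : ∑ ij ∈ antidiagonal N, 1 / ((ij.1 : ℝ) + 1) ^ 2 ≤ 2 := by
    rw [Finset.Nat.sum_antidiagonal_eq_sum_range_succ fun i _ => 1 / ((i : ℝ) + 1) ^ 2]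
    exact (sum_range_one_div_succ_sq_le N).trans (sub_le_self _ (by positivity))
  have hsnd : ∑ ij ∈ antidiagonal N, 1 / ((ij.2 : ℝ) + 1) ^ 2 ≤ 2 :=
    (Finset.Nat.sum_antidiagonal_swap
      (f := fun ij : ℕ × ℕ => 1 / ((ij.1 : ℝ) + 1) ^ 2)).trans_le hfst
  calc ∑ ij ∈ antidiagonal N, 1 / ((ij.1 : ℝ) + 1) ^ 2 * (1 / ((ij.2 : ℝ) + 1) ^ 2)
      ≤ ∑ ij ∈ antidiagonal N, 2 / ((N : ℝ) + 1) ^ 2 *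
          (1 / ((ij.1 : ℝ) + 1) ^ 2 + 1 / ((ij.2 : ℝ) + 1) ^ 2) := by
        refine Finset.sum_le_sum fun ij hij => ?_
        obtain rfl := mem_antidiagonal.1 hij
        rw [Nat.cast_add]
        exact one_div_sq_mul_one_div_sq_le (Nat.cast_nonneg _) (Nat.cast_nonneg _)
    _ = 2 / ((N : ℝ) + 1) ^ 2 * (∑ ij ∈ antidiagonal N, 1 / ((ij.1 : ℝ) + 1) ^ 2 +
          ∑ ij ∈ antidiagonal N, 1 / ((ij.2 : ℝ) + 1) ^ 2) := by
        rw [← Finset.mul_sum, Finset.sum_add_distrib]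
    _ ≤ 2 / ((N : ℝ) + 1) ^ 2 * (2 + 2) := by gcongr
    _ = 8 / ((N : ℝ) + 1) ^ 2 := by ring

/-- The sequence `N! ρᴺ / (N + 1)²` used to majorize derivatives of analytic functions. The
factor `(N + 1)⁻²` makes it stable under binomial convolution up to a constant. -/
noncomputable def majorant (ρ : ℝ) (N : ℕ) : ℝ := N ! * ρ ^ N / ((N : ℝ) + 1) ^ 2

variable {ρ : ℝ}

theorem majorant_nonneg (hρ : 0 ≤ ρ) (N : ℕ) : 0 ≤ majorant ρ N := by
  unfold majorant
  positivity

theorem monotone_majorant (hρ : 4 ≤ ρ) : Monotone (majorant ρ) := by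
  refine monotone_nat_of_le_succ fun N => ?_
  have hsq : ((N : ℝ) + 1 + 1) ^ 2 ≤ (N + 1) * ρ * (N + 1) ^ 2 := by
    calc ((N : ℝ) + 1 + 1) ^ 2 ≤ (2 * ((N : ℝ) + 1)) ^ 2 := by gcongr; linarith
      _ = 1 * 4 * ((N : ℝ) + 1) ^ 2 := by ring
      _ ≤ (N + 1) * ρ * (N + 1) ^ 2 := by gcongr; linarith
  unfold majorant
  rw [div_le_div_iff₀ (by positivity) (by positivity), Nat.factorial_succ, pow_succ ρ N]
  push_cast
  calc (N ! : ℝ) * ρ ^ N * ((N : ℝ) + 1 + 1) ^ 2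
      ≤ N ! * ρ ^ N * ((N + 1) * ρ * (N + 1) ^ 2) := by gcongr
    _ = ((N : ℝ) + 1) * N ! * (ρ ^ N * ρ) * (N + 1) ^ 2 := by ring

theorem factorial_mul_pow_le_majorant {L : ℝ} (hL : 0 ≤ L) (hρ : 4 * L ≤ ρ) (N : ℕ) :
    N ! * L ^ N ≤ majorant ρ N := by
  have hN : (N : ℝ) + 1 ≤ 2 ^ N := by exact_mod_cast Nat.lt_two_pow_self
  rw [majorant, le_div_iff₀ (by positivity), mul_assoc]
  gcongr
  calc L ^ N * ((N : ℝ) + 1) ^ 2 ≤ L ^ N * (2 ^ N) ^ 2 := by gcongr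
    _ = (4 * L) ^ N := by rw [← pow_mul, mul_comm N, pow_mul, mul_pow, mul_comm]; norm_num
    _ ≤ ρ ^ N := by gcongr

theorem binomConv_majorant_le (hρ : 0 ≤ ρ) (N : ℕ) :
    binomConv (majorant ρ) (majorant ρ) N ≤ 8 * majorant ρ N := by
  have hterm : ∀ ij ∈ antidiagonal N, N.choose ij.1 * (majorant ρ ij.1 * majorant ρ ij.2) =
      N ! * ρ ^ N * (1 / ((ij.1 : ℝ) + 1) ^ 2 * (1 / ((ij.2 : ℝ) + 1) ^ 2)) := by
    intro ij hij
    obtain rfl := mem_antidiagonal.1 hij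
    have hfactorial : ((ij.1 + ij.2).choose ij.1 : ℝ) * ij.1 ! * ij.2 ! = (ij.1 + ij.2)! := by
      rw [Nat.choose_symm_add]
      exact_mod_cast Nat.add_choose_mul_factorial_mul_factorial ij.1 ij.2
    rw [← hfactorial, majorant, majorant, pow_add]
    ring
  calc binomConv (majorant ρ) (majorant ρ) N
      = N ! * ρ ^ N * ∑ ij ∈ antidiagonal N,
          1 / ((ij.1 : ℝ) + 1) ^ 2 * (1 / ((ij.2 : ℝ) + 1) ^ 2) := by
        rw [binomConv, Finset.sum_congr rfl hterm, Finset.mul_sum]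
    _ ≤ N ! * ρ ^ N * (8 / ((N : ℝ) + 1) ^ 2) := by
        gcongr
        exact sum_antidiagonal_one_div_sq_mul_le N
    _ = 8 * majorant ρ N := by rw [majorant]; ring

theorem binomConv_majorant_add_le (hρ : 0 ≤ ρ) (p q N : ℕ) :
    binomConv (fun i => majorant ρ (i + p)) (fun j => majorant ρ (j + q)) N ≤
      8 * majorant ρ (N + (p + q)) :=
  (binomConv_shift_le (majorant_nonneg hρ) (majorant_nonneg hρ) p q N).trans
    (binomConv_majorant_le hρ _)

end Majorant

section DirectionalDerivative

variable {X : Type*} [NormedAddCommGroup X] [NormedSpace ℝ X] {v w z : X} {f g : X → ℝ}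

/-- The derivative of `f` in the constant direction `v`, as an operator on functions. -/
noncomputable def dirDeriv (v : X) (f : X → ℝ) : X → ℝ := fun z => fderiv ℝ f z v

theorem analyticAt_dirDeriv (hf : AnalyticAt ℝ f z) : AnalyticAt ℝ (dirDeriv v f) z :=
  (ContinuousLinearMap.apply ℝ ℝ v).analyticAt _ |>.comp hf.fderiv

theorem analyticAt_iterate_dirDeriv (hf : AnalyticAt ℝ f z) (k : ℕ) :
    AnalyticAt ℝ ((dirDeriv v)^[k] f) z := by
  induction k with
  | zero => exact hf
  | succ k ih => rw [Function.iterate_succ_apply']; exact analyticAt_dirDeriv ih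

theorem dirDeriv_congr (h : f =ᶠ[𝓝 z] g) : dirDeriv v f =ᶠ[𝓝 z] dirDeriv v g :=
  h.fderiv.fun_comp (fun T => T v)

theorem dirDeriv_comm (hf : AnalyticAt ℝ f z) :
    dirDeriv v (dirDeriv w f) =ᶠ[𝓝 z] dirDeriv w (dirDeriv v f) := by
  filter_upwards [hf.eventually_analyticAt] with y hy
  have second_deriv : ∀ a b : X, dirDeriv a (dirDeriv b f) y = fderiv ℝ (fderiv ℝ f) y a b := by
    intro a b
    change fderiv ℝ (fun y => fderiv ℝ f y b) y a = _
    simp [fderiv_clm_apply hy.fderiv.differentiableAt (differentiableAt_const b)]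
  have hsymm : IsSymmSndFDerivAt ℝ f y := (hy.contDiffAt (n := 2)).isSymmSndFDerivAt (by simp)
  rw [second_deriv, second_deriv, hsymm v w]

theorem iterate_dirDeriv_comm (hf : AnalyticAt ℝ f z) (k : ℕ) :
    (dirDeriv v)^[k] (dirDeriv w f) =ᶠ[𝓝 z] dirDeriv w ((dirDeriv v)^[k] f) := by
  induction k with
  | zero => rfl
  | succ k ih =>
    simp only [Function.iterate_succ_apply']
    exact (dirDeriv_congr ih).trans (dirDeriv_comm (analyticAt_iterate_dirDeriv hf k))

end DirectionalDerivative

section IteratedDerivativeBounds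

variable {X Y : Type*} [NormedAddCommGroup X] [NormedSpace ℝ X] [NormedAddCommGroup Y]
  [NormedSpace ℝ Y] {v z : X} {f g : X → ℝ}

theorem norm_iteratedFDeriv_dirDeriv_le (hf : AnalyticAt ℝ f z) (hv : ‖v‖ ≤ 1) (m : ℕ) :
    ‖iteratedFDeriv ℝ m (dirDeriv v f) z‖ ≤ ‖iteratedFDeriv ℝ (m + 1) f z‖ := by
  have h := norm_iteratedFDeriv_clm_apply_const (c := v) (n := m) (N := ω)
    hf.fderiv.contDiffAt (by simp)
  rw [norm_iteratedFDeriv_fderiv] at h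
  exact h.trans (mul_le_of_le_one_left (norm_nonneg _) hv)

theorem norm_iteratedFDeriv_iterate_dirDeriv_le (hf : AnalyticAt ℝ f z) (hv : ‖v‖ ≤ 1)
    (k m : ℕ) :
    ‖iteratedFDeriv ℝ m ((dirDeriv v)^[k] f) z‖ ≤ ‖iteratedFDeriv ℝ (k + m) f z‖ := by
  induction k generalizing m with
  | zero => rw [zero_add]; rfl
  | succ k ih =>
    rw [Function.iterate_succ_apply', Nat.add_right_comm, Nat.add_assoc]
    exact (norm_iteratedFDeriv_dirDeriv_le (analyticAt_iterate_dirDeriv hf k) hv m).trans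
      (ih (m + 1))

theorem norm_iteratedFDeriv_fun_mul_le_binomConv (hf : AnalyticAt ℝ f z)
    (hg : AnalyticAt ℝ g z) (m : ℕ) :
    ‖iteratedFDeriv ℝ m (fun y => f y * g y) z‖ ≤
      binomConv (fun i => ‖iteratedFDeriv ℝ i f z‖) (fun j => ‖iteratedFDeriv ℝ j g z‖) m := by
  obtain ⟨u, hu, huo, hz⟩ := eventually_nhds_iff.1
    (hf.eventually_analyticAt.and hg.eventually_analyticAt)
  have hfu : ContDiffOn ℝ ω f u := fun y hy => (hu y hy).1.contDiffAt.contDiffWithinAt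
  have hgu : ContDiffOn ℝ ω g u := fun y hy => (hu y hy).2.contDiffAt.contDiffWithinAt
  have h := norm_iteratedFDerivWithin_mul_le (A := ℝ) hfu hgu huo.uniqueDiffOn hz (n := m)
    (by simp)
  simpa only [iteratedFDerivWithin_of_isOpen _ huo hz, binomConv, mul_assoc,
    Finset.Nat.sum_antidiagonal_eq_sum_range_succ_mk] using h

theorem norm_iteratedFDeriv_comp_clm_le {L : Y →L[ℝ] X} (hL : ‖L‖ ≤ 1) {y : Y}
    (hf : AnalyticAt ℝ f (L y)) (m : ℕ) :
    ‖iteratedFDeriv ℝ m (f ∘ L) y‖ ≤ ‖iteratedFDeriv ℝ m f (L y)‖ := by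
  obtain ⟨u, hu, huo, hy⟩ := eventually_nhds_iff.1 hf.eventually_analyticAt
  have hfu : ContDiffOn ℝ ω f u := fun y hy => (hu y hy).contDiffAt.contDiffWithinAt
  have hpre : IsOpen (L ⁻¹' u) := huo.preimage L.continuous
  have h := L.iteratedFDerivWithin_comp_right hfu huo.uniqueDiffOn hpre.uniqueDiffOn hy
    (i := m) (by simp)
  rw [iteratedFDerivWithin_of_isOpen _ hpre hy, iteratedFDerivWithin_of_isOpen _ huo hy] at h
  rw [h]
  exact (ContinuousMultilinearMap.norm_compContinuousLinearMap_le _ _).trans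
    (mul_le_of_le_one_right (norm_nonneg _) (Finset.prod_le_one (fun _ _ => norm_nonneg _)
      fun _ _ => hL))

theorem norm_iteratedFDeriv_le_factorial_mul {p : FormalMultilinearSeries ℝ X ℝ} {r : ENNReal}
    (hp : HasFPowerSeriesOnBall f p z r) (m : ℕ) :
    ‖iteratedFDeriv ℝ m f z‖ ≤ m ! * ‖p m‖ := by
  refine ContinuousMultilinearMap.opNorm_le_bound (by positivity) fun v => ?_
  rw [hp.iteratedFDeriv_eq_sum_of_completeSpace]
  have permuted_le (σ : Equiv.Perm (Fin m)) :
      ‖p m (fun i => v (σ i))‖ ≤ ‖p m‖ * ∏ i, ‖v i‖ := by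
    rw [← Equiv.prod_comp σ fun i => ‖v i‖]
    exact (p m).le_opNorm _
  refine (norm_sum_le_of_le _ fun σ _ => permuted_le σ).trans_eq ?_
  simp [Finset.card_univ, Fintype.card_perm, mul_assoc]

theorem exists_norm_iteratedFDeriv_le (hf : AnalyticAt ℝ f z) :
    ∃ C L : ℝ, 0 < C ∧ 1 ≤ L ∧ ∀ m, ‖iteratedFDeriv ℝ m f z‖ ≤ C * m ! * L ^ m := by
  obtain ⟨p, r, hp⟩ := hf
  obtain ⟨ρ, hρ, hρr⟩ := ENNReal.lt_iff_exists_nnreal_btwn.1 hp.r_pos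
  obtain ⟨C, hC, hb⟩ := p.norm_le_div_pow_of_pos_of_lt_radius (by exact_mod_cast hρ)
    (hρr.trans_le hp.r_le)
  refine ⟨C, max 1 (ρ : ℝ)⁻¹, hC, le_max_left _ _, fun m => ?_⟩
  calc ‖iteratedFDeriv ℝ m f z‖ ≤ m ! * ‖p m‖ := norm_iteratedFDeriv_le_factorial_mul hp m
    _ ≤ m ! * (C / ρ ^ m) := by gcongr; exact hb m
    _ = C * m ! * (ρ : ℝ)⁻¹ ^ m := by rw [inv_pow]; ring
    _ ≤ C * m ! * max 1 (ρ : ℝ)⁻¹ ^ m := by gcongr; exact le_max_right _ _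

end IteratedDerivativeBounds

section NormalDerivative

variable {E : Type*} [NormedAddCommGroup E] [NormedSpace ℝ E] {f g : ℝ × E → ℝ} {x : E}

/-- The `k`-th normal derivative `∂ₛᵏ f (0, x)` of a function of `(s, x) ∈ ℝ × E` along the
hyperplane `s = 0`, as a function of `x`. -/
noncomputable def normalDeriv (k : ℕ) (f : ℝ × E → ℝ) : E → ℝ :=
  fun x => iteratedDeriv k (fun s => f (s, x)) 0

theorem analyticAt_slice {s : ℝ} (hf : AnalyticAt ℝ f (s, x)) :
    AnalyticAt ℝ (fun σ => f (σ, x)) s :=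
  AnalyticAt.comp (f := fun σ : ℝ => (σ, x)) hf (analyticAt_id.prod analyticAt_const)

theorem deriv_slice {s : ℝ} (hf : DifferentiableAt ℝ f (s, x)) :
    deriv (fun σ => f (σ, x)) s = dirDeriv (1, 0) f (s, x) :=
  (hf.hasFDerivAt.comp_hasDerivAt s
    ((hasDerivAt_id s).prodMk (hasDerivAt_const s x))).deriv

theorem iteratedDeriv_slice {s : ℝ} (hf : AnalyticAt ℝ f (s, x)) (k : ℕ) :
    iteratedDeriv k (fun σ => f (σ, x)) s = (dirDeriv (1, 0))^[k] f (s, x) := by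
  induction k generalizing s with
  | zero => simp
  | succ k ih =>
    have hcont : ContinuousAt (fun σ : ℝ => (σ, x)) s := by fun_prop
    have heq : iteratedDeriv k (fun σ => f (σ, x)) =ᶠ[𝓝 s]
        fun σ => (dirDeriv (1, 0))^[k] f (σ, x) := by
      filter_upwards [hcont.eventually hf.eventually_analyticAt] with σ hσ using ih hσ
    rw [iteratedDeriv_succ, heq.deriv_eq, Function.iterate_succ_apply',
      deriv_slice (analyticAt_iterate_dirDeriv hf k).differentiableAt]

theorem normalDeriv_eq_iterate_dirDeriv (hf : AnalyticAt ℝ f (0, x)) (k : ℕ) :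
    normalDeriv k f x = (dirDeriv (1, 0))^[k] f (0, x) :=
  iteratedDeriv_slice hf k

theorem eventually_analyticAt_zero_prod (hf : AnalyticAt ℝ f (0, x)) :
    ∀ᶠ y in 𝓝 x, AnalyticAt ℝ f (0, y) :=
  (by fun_prop : ContinuousAt (fun y : E => ((0 : ℝ), y)) x).eventually hf.eventually_analyticAt

theorem normalDeriv_eventuallyEq (hf : AnalyticAt ℝ f (0, x)) (k : ℕ) :
    normalDeriv k f =ᶠ[𝓝 x]
      (dirDeriv (1, 0))^[k] f ∘ ContinuousLinearMap.inr ℝ ℝ E := by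
  filter_upwards [eventually_analyticAt_zero_prod hf] with y hy
  simp [normalDeriv_eq_iterate_dirDeriv hy]

theorem analyticAt_normalDeriv (hf : AnalyticAt ℝ f (0, x)) (k : ℕ) :
    AnalyticAt ℝ (normalDeriv k f) x := by
  have hk : AnalyticAt ℝ ((dirDeriv (1, 0))^[k] f) (ContinuousLinearMap.inr ℝ ℝ E x) :=
    analyticAt_iterate_dirDeriv hf k
  exact (hk.comp ((ContinuousLinearMap.inr ℝ ℝ E).analyticAt x)).congr
    (normalDeriv_eventuallyEq hf k).symm

theorem normalDeriv_fun_add (hf : AnalyticAt ℝ f (0, x)) (hg : AnalyticAt ℝ g (0, x)) (k : ℕ) :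
    normalDeriv k (fun z => f z + g z) x = normalDeriv k f x + normalDeriv k g x :=
  iteratedDeriv_add (analyticAt_slice hf).contDiffAt (analyticAt_slice hg).contDiffAt

theorem normalDeriv_fun_sub (hf : AnalyticAt ℝ f (0, x)) (hg : AnalyticAt ℝ g (0, x)) (k : ℕ) :
    normalDeriv k (fun z => f z - g z) x = normalDeriv k f x - normalDeriv k g x :=
  iteratedDeriv_sub (analyticAt_slice hf).contDiffAt (analyticAt_slice hg).contDiffAt

theorem normalDeriv_fun_const_mul (hf : AnalyticAt ℝ f (0, x)) (c : ℝ) (k : ℕ) :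
    normalDeriv k (fun z => c * f z) x = c * normalDeriv k f x :=
  iteratedDeriv_const_mul c (analyticAt_slice hf).contDiffAt

theorem normalDeriv_fun_mul (hf : AnalyticAt ℝ f (0, x)) (hg : AnalyticAt ℝ g (0, x)) (k : ℕ) :
    normalDeriv k (fun z => f z * g z) x =
      binomConv (fun i => normalDeriv i f x) (fun j => normalDeriv j g x) k := by
  have h := iteratedDeriv_fun_mul (n := k) (analyticAt_slice hf).contDiffAt
    (analyticAt_slice hg).contDiffAt
  simpa only [normalDeriv, binomConv, mul_assoc,
    Finset.Nat.sum_antidiagonal_eq_sum_range_succ_mk] using h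

theorem normalDeriv_comp_snd_mul_pow {E : Type*} (h : E → ℝ) (j k : ℕ) (x : E) :
    normalDeriv j (fun z => h z.2 * z.1 ^ k) x = if j = k then k ! * h x else 0 := by
  simp only [normalDeriv]
  rw [iteratedDeriv_const_mul_field, iteratedDeriv_fun_pow_zero]
  rcases eq_or_ne j k with rfl | hjk
  · simp [mul_comm]
  · simp [hjk]

theorem normalDeriv_fst_mul (hf : AnalyticAt ℝ f (0, x)) (k : ℕ) :
    normalDeriv k (fun z => z.1 * f z) x = k * normalDeriv (k - 1) f x := by
  have normalDeriv_fst (i : ℕ) :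
      normalDeriv i (Prod.fst : ℝ × E → ℝ) x = if i = 1 then 1 else 0 := by
    simp [normalDeriv, iteratedDeriv_fun_id_zero]
  rw [normalDeriv_fun_mul analyticAt_fst hf, binomConv,
    Finset.Nat.sum_antidiagonal_eq_sum_range_succ_mk]
  rcases k with _ | k <;> simp [normalDeriv_fst]

theorem normalDeriv_dirDeriv_normal (hf : AnalyticAt ℝ f (0, x)) (k : ℕ) :
    normalDeriv k (dirDeriv (1, 0) f) x = normalDeriv (k + 1) f x := by
  rw [normalDeriv_eq_iterate_dirDeriv (analyticAt_dirDeriv hf),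
    normalDeriv_eq_iterate_dirDeriv hf, Function.iterate_succ_apply]

theorem normalDeriv_dirDeriv_tangential (hf : AnalyticAt ℝ f (0, x)) (e : E) (k : ℕ) :
    normalDeriv k (dirDeriv (0, e) f) x = dirDeriv e (normalDeriv k f) x := by
  have hk : DifferentiableAt ℝ ((dirDeriv (1, 0))^[k] f) (ContinuousLinearMap.inr ℝ ℝ E x) :=
    (analyticAt_iterate_dirDeriv hf k).differentiableAt
  have hchain := hk.hasFDerivAt.comp x (ContinuousLinearMap.inr ℝ ℝ E).hasFDerivAt
  rw [normalDeriv_eq_iterate_dirDeriv (analyticAt_dirDeriv hf),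
    (iterate_dirDeriv_comm hf k).self_of_nhds,
    (dirDeriv_congr (normalDeriv_eventuallyEq hf k)).self_of_nhds, dirDeriv, dirDeriv,
    hchain.fderiv]
  simp

theorem exists_norm_iteratedFDeriv_normalDeriv_le (hf : AnalyticAt ℝ f (0, x)) :
    ∃ C L : ℝ, 0 < C ∧ 1 ≤ L ∧ ∀ k m, ‖iteratedFDeriv ℝ m (normalDeriv k f) x‖ ≤
      C * (k + m)! * L ^ (k + m) := by
  obtain ⟨C, L, hC, hL, hb⟩ := exists_norm_iteratedFDeriv_le hf
  refine ⟨C, L, hC, hL, fun k m => ?_⟩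
  have hinr : ‖ContinuousLinearMap.inr ℝ ℝ E‖ ≤ 1 :=
    ContinuousLinearMap.opNorm_le_bound _ zero_le_one fun y => by simp [Prod.norm_def]
  have hk : AnalyticAt ℝ ((dirDeriv (1, 0))^[k] f) (ContinuousLinearMap.inr ℝ ℝ E x) :=
    analyticAt_iterate_dirDeriv hf k
  calc ‖iteratedFDeriv ℝ m (normalDeriv k f) x‖
      = ‖iteratedFDeriv ℝ m ((dirDeriv (1, 0))^[k] f ∘ ContinuousLinearMap.inr ℝ ℝ E) x‖ := by
        rw [((normalDeriv_eventuallyEq hf k).iteratedFDeriv ℝ m).self_of_nhds]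
    _ ≤ ‖iteratedFDeriv ℝ m ((dirDeriv (1, 0))^[k] f) (ContinuousLinearMap.inr ℝ ℝ E x)‖ :=
        norm_iteratedFDeriv_comp_clm_le hinr hk m
    _ ≤ ‖iteratedFDeriv ℝ (k + m) f (ContinuousLinearMap.inr ℝ ℝ E x)‖ :=
        norm_iteratedFDeriv_iterate_dirDeriv_le hf (by simp [Prod.norm_def]) k m
    _ ≤ C * (k + m)! * L ^ (k + m) := hb _

theorem eventuallyEq_zero_of_iteratedDeriv_eq_zero {h : ℝ → ℝ} {s : ℝ} (hh : AnalyticAt ℝ h s)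
    (h0 : ∀ k, iteratedDeriv k h s = 0) : h =ᶠ[𝓝 s] 0 := by
  have hp := hh.hasFPowerSeriesAt
  have hzero : (fun k => iteratedDeriv k h s / k !) = 0 := funext fun k => by simp [h0 k]
  rw [hzero, FormalMultilinearSeries.ofScalars_series_eq_zero_of_scalar_zero] at hp
  exact hp.eventually_eq_zero

theorem eventuallyEq_zero_of_normalDeriv_eq_zero (hf : AnalyticAt ℝ f (0, x))
    (h : ∀ᶠ y in 𝓝 x, ∀ k, normalDeriv k f y = 0) : f =ᶠ[𝓝 (0, x)] 0 := by
  have hsnd : ∀ᶠ z : ℝ × E in 𝓝 (0, x), ∀ k, normalDeriv k f z.2 = 0 :=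
    (continuous_snd.continuousAt (x := ((0 : ℝ), x))).eventually h
  obtain ⟨ε, hε, hball⟩ := Metric.eventually_nhds_iff_ball.1 (hf.eventually_analyticAt.and hsnd)
  filter_upwards [Metric.ball_mem_nhds _ hε] with ⟨s, y⟩ hz
  rw [← ball_prod_same, Set.mem_prod] at hz
  have hmem : ∀ σ ∈ Metric.ball (0 : ℝ) ε, (σ, y) ∈ Metric.ball ((0 : ℝ), x) ε := fun σ hσ => by
    rw [← ball_prod_same]; exact ⟨hσ, hz.2⟩
  have hslice : AnalyticOnNhd ℝ (fun σ => f (σ, y)) (Metric.ball (0 : ℝ) ε) := fun σ hσ =>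
    analyticAt_slice (hball _ (hmem σ hσ)).1
  have h0 : (0 : ℝ) ∈ Metric.ball (0 : ℝ) ε := Metric.mem_ball_self hε
  exact hslice.eqOn_zero_of_preconnected_of_eventuallyEq_zero
    (convex_ball _ _).isPreconnected h0
    (eventuallyEq_zero_of_iteratedDeriv_eq_zero (hslice 0 h0) (hball _ (hmem 0 h0)).2) hz.1

end NormalDerivative

section PowerSeries

variable {E : Type*} [NormedAddCommGroup E] [NormedSpace ℝ E] {x : E} {r : ENNReal} {M L : ℝ}

theorem le_radius_of_norm_le_mul_pow {p : FormalMultilinearSeries ℝ E ℝ} (hL : 0 < L)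
    (hp : ∀ m, ‖p m‖ ≤ M * L ^ m) : ENNReal.ofReal L⁻¹ ≤ p.radius := by
  refine p.le_radius_of_bound M fun m => ?_
  rw [Real.coe_toNNReal _ (by positivity)]
  calc ‖p m‖ * L⁻¹ ^ m ≤ M * L ^ m * L⁻¹ ^ m := by gcongr; exact hp m
    _ = M := by rw [inv_pow]; field_simp

theorem iteratedDeriv_tsum_mul_pow {g : ℕ → ℝ} (hL : 0 < L) (hg : ∀ k, |g k| ≤ M * L ^ k)
    (k : ℕ) : iteratedDeriv k (fun s => ∑' j, g j * s ^ j) 0 = k ! * g k := by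
  set p := FormalMultilinearSeries.ofScalars ℝ g
  have hrad : 0 < p.radius := (ENNReal.ofReal_pos.2 (by positivity)).trans_le
    (le_radius_of_norm_le_mul_pow (M := M) hL fun m => by
      simpa [p, FormalMultilinearSeries.ofScalars_norm] using hg m)
  have hsum : p.sum = fun s => ∑' j, g j * s ^ j := by
    ext s
    simp [p, FormalMultilinearSeries.sum, mul_comm]
  have hp : HasFPowerSeriesAt (fun s => ∑' j, g j * s ^ j) p 0 :=
    hsum ▸ (p.hasFPowerSeriesOnBall hrad).hasFPowerSeriesAt
  have hcoef := congrFun (FormalMultilinearSeries.ofScalars_series_injective ℝ ℝ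
    (hp.eq_formalMultilinearSeries hp.analyticAt.hasFPowerSeriesAt)) k
  rw [hcoef]
  field_simp

/-- The Taylor series of `f` at `x`, with coefficients the normalized iterated derivatives. -/
noncomputable def taylorSeries (f : E → ℝ) (x : E) : FormalMultilinearSeries ℝ E ℝ :=
  fun m => (m ! : ℝ)⁻¹ • iteratedFDeriv ℝ m f x

theorem norm_taylorSeries_le {f : E → ℝ} (hf : ∀ m, ‖iteratedFDeriv ℝ m f x‖ ≤ M * m ! * L ^ m)
    (m : ℕ) : ‖taylorSeries f x m‖ ≤ M * L ^ m := by
  simp only [taylorSeries, norm_smul, norm_inv, Real.norm_natCast]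
  rw [inv_mul_le_iff₀ (by positivity)]
  exact (hf m).trans_eq (by ring)

theorem hasFPowerSeriesOnBall_taylorSeries {f : E → ℝ} (hr₀ : 0 < r)
    (hf : AnalyticOnNhd ℝ f (Metric.eball x r)) (hr : r ≤ (taylorSeries f x).radius) :
    HasFPowerSeriesOnBall f (taylorSeries f x) x r := by
  set p := taylorSeries f x
  have hsum : HasFPowerSeriesOnBall (fun y => p.sum (y - x)) p x r := by
    simpa using ((p.hasFPowerSeriesOnBall (hr₀.trans_le hr)).mono hr₀ hr).comp_sub x
  have hx : x ∈ Metric.eball x r := Metric.mem_eball_self hr₀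
  have hnear : (fun y => p.sum (y - x)) =ᶠ[𝓝 x] f := by
    obtain ⟨q, ρ, hq⟩ := hf x hx
    filter_upwards [Metric.eball_mem_nhds x hq.r_pos] with y hy
    have hy' : y - x ∈ Metric.eball 0 ρ := by
      rwa [Metric.mem_eball, edist_zero_right, ← edist_eq_enorm_sub]
    have hTaylor := (hq.hasSum_iteratedFDeriv hy').tsum_eq
    rwa [add_sub_cancel] at hTaylor
  exact hsum.congr (hsum.analyticOnNhd.eqOn_of_preconnected_of_eventuallyEq hf
    Metric.isPreconnected_eball hx hnear)

theorem abs_le_two_mul_of_hasFPowerSeriesOnBall {f : E → ℝ}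
    {p : FormalMultilinearSeries ℝ E ℝ} (hf : HasFPowerSeriesOnBall f p x r) (hL : 0 < L)
    (hr : r ≤ ENNReal.ofReal (2 * L)⁻¹) (hp : ∀ m, ‖p m‖ ≤ M * L ^ m) {y : E}
    (hy : y ∈ Metric.eball x r) : |f y| ≤ 2 * M := by
  have hM : 0 ≤ M := (norm_nonneg _).trans (by simpa using hp 0)
  have hyL : ‖y - x‖ * L ≤ 1 / 2 := by
    have hdist := Metric.eball_ofReal (x := x) ▸ Metric.eball_subset_eball hr hy
    rw [Metric.mem_ball, dist_eq_norm] at hdist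
    calc ‖y - x‖ * L ≤ (2 * L)⁻¹ * L := by gcongr
      _ = 1 / 2 := by field_simp
  have hsum := hf.hasSum (y := y - x)
    (by rwa [Metric.mem_eball, edist_zero_right, ← edist_eq_enorm_sub])
  have hterm : ∀ m, ‖p m fun _ => y - x‖ ≤ M * (1 / 2) ^ m := fun m =>
    calc ‖p m fun _ => y - x‖ ≤ ‖p m‖ * ‖y - x‖ ^ m := by
          simpa using (p m).le_opNorm fun _ => y - x
      _ ≤ M * L ^ m * ‖y - x‖ ^ m := by gcongr; exact hp m
      _ = M * (‖y - x‖ * L) ^ m := by rw [mul_pow]; ring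
      _ ≤ M * (1 / 2) ^ m := by gcongr
  have hbound := tsum_of_norm_bounded (hasSum_geometric_two.mul_left M) hterm
  rwa [hsum.tsum_eq, add_sub_cancel, Real.norm_eq_abs, mul_comm] at hbound

end PowerSeries

section JointSeries

variable {E : Type*} [NormedAddCommGroup E] [NormedSpace ℝ E] {x : E} {r : ENNReal} {M L : ℝ}
  {g : ℕ → E → ℝ} {q : ℕ → FormalMultilinearSeries ℝ E ℝ}

/-- The homogeneous part of degree `N` of `∑ₖ sᵏ qₖ(y)`, as a series in `(s, y) ∈ ℝ × E`. -/
noncomputable def jointSeries : (ℕ → FormalMultilinearSeries ℝ E ℝ) →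
    FormalMultilinearSeries ℝ (ℝ × E) ℝ
  | q, 0 => (q 0 0).compContinuousLinearMap fun _ => ContinuousLinearMap.snd ℝ ℝ E
  | q, N + 1 =>
    (q 0 (N + 1)).compContinuousLinearMap (fun _ => ContinuousLinearMap.snd ℝ ℝ E) +
      ContinuousLinearMap.uncurryLeft
        ((ContinuousLinearMap.fst ℝ ℝ E).smulRight (jointSeries (fun k => q (k + 1)) N))

theorem norm_compContinuousLinearMap_snd_le {N : ℕ} (p : E [×N]→L[ℝ] ℝ) :
    ‖p.compContinuousLinearMap fun _ => ContinuousLinearMap.snd ℝ ℝ E‖ ≤ ‖p‖ :=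
  (ContinuousMultilinearMap.norm_compContinuousLinearMap_le _ _).trans
    (mul_le_of_le_one_right (norm_nonneg _) (Finset.prod_le_one (fun _ _ => norm_nonneg _)
      fun _ _ => ContinuousLinearMap.norm_snd_le ℝ ℝ E))

theorem norm_jointSeries_le (hq : ∀ k m, ‖q k m‖ ≤ M * L ^ (k + m)) (N : ℕ) :
    ‖jointSeries q N‖ ≤ (N + 1) * M * L ^ N := by
  induction N generalizing q M with
  | zero =>
    rw [jointSeries]
    exact (norm_compContinuousLinearMap_snd_le _).trans (by simpa using hq 0 0)
  | succ N ih =>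
    have hhead : ‖(q 0 (N + 1)).compContinuousLinearMap fun _ =>
        ContinuousLinearMap.snd ℝ ℝ E‖ ≤ M * L ^ (N + 1) :=
      (norm_compContinuousLinearMap_snd_le _).trans (by simpa using hq 0 (N + 1))
    have htail : ‖jointSeries (fun k => q (k + 1)) N‖ ≤ (N + 1) * (M * L) * L ^ N :=
      ih fun k m => (hq (k + 1) m).trans_eq (by ring)
    rw [jointSeries]
    refine (norm_add_le _ _).trans ((add_le_add hhead ?_).trans_eq
      (b := M * L ^ (N + 1) + (N + 1) * (M * L) * L ^ N) (by push_cast; ring))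
    rw [ContinuousLinearMap.uncurryLeft_norm, ContinuousLinearMap.norm_smulRight_apply]
    exact (mul_le_of_le_one_left (norm_nonneg _)
      (ContinuousLinearMap.norm_fst_le ℝ ℝ E)).trans htail

theorem jointSeries_apply (q : ℕ → FormalMultilinearSeries ℝ E ℝ) (N : ℕ) (z : ℝ × E) :
    jointSeries q N (fun _ => z) = ∑ ij ∈ antidiagonal N,
      z.1 ^ ij.1 * q ij.1 ij.2 (fun _ => z.2) := by
  induction N generalizing q with
  | zero => simp [jointSeries]
  | succ N ih =>
    have hshift : (ContinuousLinearMap.uncurryLeft ((ContinuousLinearMap.fst ℝ ℝ E).smulRight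
        (jointSeries (fun k => q (k + 1)) N))) (fun _ => z) =
        z.1 * jointSeries (fun k => q (k + 1)) N (fun _ => z) := rfl
    rw [jointSeries, Finset.Nat.sum_antidiagonal_succ, add_apply, hshift, ih, Finset.mul_sum]
    simp [pow_succ', mul_assoc]

theorem summable_pow_mul_apply (hL : 0 ≤ L) (hq : ∀ k m, ‖q k m‖ ≤ M * L ^ (k + m)) {s : ℝ}
    {y : E} (hs : ‖s‖ * L < 1) (hy : ‖y‖ * L < 1) :
    Summable fun ij : ℕ × ℕ => s ^ ij.1 * q ij.1 ij.2 fun _ => y := by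
  have hgeom := (Summable.mul_of_nonneg (summable_geometric_of_lt_one (by positivity) hs)
    (summable_geometric_of_lt_one (by positivity) hy) (fun k => pow_nonneg (by positivity) k)
    (fun k => pow_nonneg (by positivity) k)).mul_left M
  refine Summable.of_norm_bounded hgeom fun ij => ?_
  have hle : ‖q ij.1 ij.2 fun _ => y‖ ≤ ‖q ij.1 ij.2‖ * ‖y‖ ^ ij.2 := by
    simpa using (q ij.1 ij.2).le_opNorm fun _ => y
  calc ‖s ^ ij.1 * q ij.1 ij.2 fun _ => y‖
      ≤ ‖s‖ ^ ij.1 * (M * L ^ (ij.1 + ij.2) * ‖y‖ ^ ij.2) := by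
        rw [norm_mul, norm_pow]
        gcongr
        exact hle.trans (by gcongr; exact hq _ _)
    _ = M * ((‖s‖ * L) ^ ij.1 * (‖y‖ * L) ^ ij.2) := by rw [mul_pow, mul_pow, pow_add]; ring

theorem hasFPowerSeriesOnBall_tsum_mul_pow (hg : ∀ k, HasFPowerSeriesOnBall (g k) (q k) x r)
    (hL : 0 < L) (hr : r ≤ ENNReal.ofReal (2 * L)⁻¹)
    (hq : ∀ k m, ‖q k m‖ ≤ M * L ^ (k + m)) :
    HasFPowerSeriesOnBall (fun z : ℝ × E => ∑' k, g k z.2 * z.1 ^ k) (jointSeries q) (0, x) r where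
  r_le := by
    have hM : 0 ≤ M := (norm_nonneg _).trans (by simpa using hq 0 0)
    refine hr.trans (le_radius_of_norm_le_mul_pow (M := M) (by positivity) fun N => ?_)
    have hN : ((N : ℝ) + 1) ≤ 2 ^ N := by exact_mod_cast Nat.lt_two_pow_self
    calc ‖jointSeries q N‖ ≤ (N + 1) * M * L ^ N := norm_jointSeries_le hq N
      _ ≤ 2 ^ N * M * L ^ N := by gcongr
      _ = M * (2 * L) ^ N := by rw [mul_pow]; ring
  r_pos := (hg 0).r_pos
  hasSum {z} hz := by
    obtain ⟨s, y⟩ := z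
    have hsmall : ∀ {t : ℝ}, t ≤ ‖(s, y)‖ → t * L < 1 := fun {t} ht => by
      have hz' := Metric.eball_ofReal (x := (0 : ℝ × E)) ▸ Metric.eball_subset_eball hr hz
      rw [mem_ball_zero_iff] at hz'
      calc t * L < (2 * L)⁻¹ * L := by gcongr; exact ht.trans_lt hz'
        _ < 1 := by rw [mul_inv, mul_assoc, inv_mul_cancel₀ hL.ne']; norm_num
    have hy : y ∈ Metric.eball 0 r := by
      rw [Metric.mem_eball, Prod.edist_eq] at hz
      exact (max_lt_iff.1 hz).2
    have hsummable := summable_pow_mul_apply hL.le hq (hsmall (norm_fst_le (s, y)))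
      (hsmall (norm_snd_le (s, y)))
    have hrow : ∀ k, HasSum (fun m => s ^ k * q k m fun _ => y) (g k (x + y) * s ^ k) := fun k =>
      mul_comm (s ^ k) _ ▸ ((hg k).hasSum hy).mul_left _
    have htotal := hsummable.hasSum.prod_fiberwise hrow
    have hdiag := ((Finset.HasAntidiagonal.sigmaAntidiagonalEquivProd (A := ℕ)).hasSum_iff.2
      hsummable.hasSum).sigma fun N => hasSum_fintype _
    simp only [Prod.mk_add_mk, zero_add, htotal.tsum_eq, jointSeries_apply]
    exact HasSum.congr_fun hdiag fun N => (Finset.sum_coe_sort (antidiagonal N)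
      fun ij : ℕ × ℕ => s ^ ij.1 * q ij.1 ij.2 fun _ => y).symm

theorem exists_hasFPowerSeriesOnBall_taylorSeries (hg : ∀ᶠ y in 𝓝 x, ∀ k, AnalyticAt ℝ (g k) y)
    (hL : 0 < L) (hb : ∀ k m, ‖iteratedFDeriv ℝ m (g k) x‖ ≤ M * m ! * L ^ (k + m)) :
    ∃ r ≤ ENNReal.ofReal (2 * L)⁻¹,
      ∀ k, HasFPowerSeriesOnBall (g k) (taylorSeries (g k) x) x r := by
  obtain ⟨ε, hε, hball⟩ := Metric.nhds_basis_eball.eventually_iff.1 hg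
  refine ⟨min ε (ENNReal.ofReal (2 * L)⁻¹), min_le_right _ _, fun k =>
    hasFPowerSeriesOnBall_taylorSeries (lt_min hε (by simpa using hL))
      (fun y hy => hball (Metric.eball_subset_eball (min_le_left _ _) hy) k) ?_⟩
  have hrad : ENNReal.ofReal L⁻¹ ≤ (taylorSeries (g k) x).radius :=
    le_radius_of_norm_le_mul_pow (M := M * L ^ k) hL
      (norm_taylorSeries_le fun m => (hb k m).trans_eq (by ring))
  refine (min_le_right _ _).trans (le_trans (ENNReal.ofReal_le_ofReal ?_) hrad)
  gcongr
  linarith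

theorem analyticAt_tsum_mul_pow (hg : ∀ᶠ y in 𝓝 x, ∀ k, AnalyticAt ℝ (g k) y)
    (hL : 0 < L) (hb : ∀ k m, ‖iteratedFDeriv ℝ m (g k) x‖ ≤ M * m ! * L ^ (k + m)) :
    AnalyticAt ℝ (fun z : ℝ × E => ∑' k, g k z.2 * z.1 ^ k) (0, x) := by
  obtain ⟨r, hr, hp⟩ := exists_hasFPowerSeriesOnBall_taylorSeries hg hL hb
  have hq : ∀ k m, ‖taylorSeries (g k) x m‖ ≤ M * L ^ (k + m) := fun k m =>
    (norm_taylorSeries_le (M := M * L ^ k) (L := L)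
      (fun m => (hb k m).trans_eq (by ring)) m).trans_eq (by ring)
  exact (hasFPowerSeriesOnBall_tsum_mul_pow hp hL hr hq).analyticAt

theorem eventually_abs_le_mul_pow (hg : ∀ᶠ y in 𝓝 x, ∀ k, AnalyticAt ℝ (g k) y)
    (hL : 0 < L) (hb : ∀ k m, ‖iteratedFDeriv ℝ m (g k) x‖ ≤ M * m ! * L ^ (k + m)) :
    ∀ᶠ y in 𝓝 x, ∀ k, |g k y| ≤ 2 * M * L ^ k := by
  obtain ⟨r, hr, hp⟩ := exists_hasFPowerSeriesOnBall_taylorSeries hg hL hb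
  filter_upwards [Metric.eball_mem_nhds x (hp 0).r_pos] with y hy k
  rw [mul_assoc]
  exact abs_le_two_mul_of_hasFPowerSeriesOnBall (hp k) hL hr
    (norm_taylorSeries_le fun m => (hb k m).trans_eq (by ring)) hy

end JointSeries

section NormalSeries

variable {E : Type*} [NormedAddCommGroup E] [NormedSpace ℝ E] {x : E} {M L : ℝ}
  {g : ℕ → E → ℝ}

/-- The formal solution of `normalDeriv k f = g k` for all `k`, as a power series in `s`. -/
noncomputable def normalSeries (g : ℕ → E → ℝ) : ℝ × E → ℝ :=
  fun z => ∑' k, g k z.2 / k ! * z.1 ^ k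

theorem norm_iteratedFDeriv_div_factorial_le (hM : 0 ≤ M) (hL : 0 ≤ L) {k m : ℕ}
    (hg : AnalyticAt ℝ (g k) x)
    (hb : ‖iteratedFDeriv ℝ m (g k) x‖ ≤ M * (k + m)! * L ^ (k + m)) :
    ‖iteratedFDeriv ℝ m (fun y => g k y / k !) x‖ ≤ M * m ! * (2 * L) ^ (k + m) := by
  have hfun : (fun y => g k y / k !) = ((k ! : ℝ)⁻¹) • g k := by
    ext y
    simp [div_eq_inv_mul]
  have hfactorial : ((k + m)! : ℝ) ≤ 2 ^ (k + m) * k ! * m ! := by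
    rw [← Nat.add_choose_mul_factorial_mul_factorial]
    push_cast
    gcongr
    exact_mod_cast Nat.choose_le_two_pow _ _
  rw [hfun, iteratedFDeriv_const_smul_apply hg.contDiffAt, norm_smul, norm_inv,
    Real.norm_of_nonneg (by positivity), inv_mul_le_iff₀ (by positivity)]
  calc ‖iteratedFDeriv ℝ m (g k) x‖ ≤ M * (2 ^ (k + m) * k ! * m !) * L ^ (k + m) :=
        hb.trans (by gcongr)
    _ = k ! * (M * m ! * (2 * L) ^ (k + m)) := by
        rw [mul_pow]
        ring

theorem analyticAt_normalSeries (hM : 0 ≤ M) (hL : 0 < L)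
    (hg : ∀ᶠ y in 𝓝 x, ∀ k, AnalyticAt ℝ (g k) y)
    (hb : ∀ k m, ‖iteratedFDeriv ℝ m (g k) x‖ ≤ M * (k + m)! * L ^ (k + m)) :
    AnalyticAt ℝ (normalSeries g) (0, x) :=
  analyticAt_tsum_mul_pow (hg.mono fun _ h k => (h k).div_const) (mul_pos two_pos hL) fun k m =>
    norm_iteratedFDeriv_div_factorial_le hM hL.le (hg.self_of_nhds k) (hb k m)

theorem eventually_normalDeriv_normalSeries (hM : 0 ≤ M) (hL : 0 < L)
    (hg : ∀ᶠ y in 𝓝 x, ∀ k, AnalyticAt ℝ (g k) y)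
    (hb : ∀ k m, ‖iteratedFDeriv ℝ m (g k) x‖ ≤ M * (k + m)! * L ^ (k + m)) :
    ∀ᶠ y in 𝓝 x, ∀ k, normalDeriv k (normalSeries g) y = g k y := by
  filter_upwards [eventually_abs_le_mul_pow (hg.mono fun _ h k => (h k).div_const)
    (mul_pos two_pos hL) fun k m =>
    norm_iteratedFDeriv_div_factorial_le hM hL.le (hg.self_of_nhds k) (hb k m)] with y hy k
  exact (iteratedDeriv_tsum_mul_pow (mul_pos two_pos hL) hy k).trans
    (mul_div_cancel₀ _ (by positivity))

/-- The analytic quotient of `f` by `s`, for `f` vanishing on `s = 0` (elsewhere `f / s` has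
the junk value `0` there). -/
noncomputable def normalQuotient (f : ℝ × E → ℝ) : ℝ × E → ℝ :=
  normalSeries fun k y => normalDeriv (k + 1) f y / (k + 1)

variable {f : ℝ × E → ℝ}

theorem exists_norm_iteratedFDeriv_normalDeriv_succ_div_le (hf : AnalyticAt ℝ f (0, x)) :
    ∃ M L : ℝ, 0 ≤ M ∧ 0 < L ∧ ∀ k m,
      ‖iteratedFDeriv ℝ m (fun y => normalDeriv (k + 1) f y / (k + 1)) x‖ ≤
        M * (k + m)! * L ^ (k + m) := by
  obtain ⟨C, L, hC, hL, hb⟩ := exists_norm_iteratedFDeriv_normalDeriv_le hf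
  refine ⟨C * L, 2 * L, by positivity, by positivity, fun k m => ?_⟩
  have hfun : (fun y => normalDeriv (k + 1) f y / (k + 1)) =
      ((k : ℝ) + 1)⁻¹ • normalDeriv (k + 1) f := by
    ext y
    simp [div_eq_inv_mul]
  have hpow : ((k + m : ℕ) + 1 : ℝ) ≤ 2 ^ (k + m) := by exact_mod_cast Nat.lt_two_pow_self
  have hinv : ((k : ℝ) + 1)⁻¹ ≤ 1 := inv_le_one_of_one_le₀ (by simp)
  rw [hfun, iteratedFDeriv_const_smul_apply (analyticAt_normalDeriv hf _).contDiffAt, norm_smul,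
    norm_inv, Real.norm_of_nonneg (by positivity)]
  calc ((k : ℝ) + 1)⁻¹ * ‖iteratedFDeriv ℝ m (normalDeriv (k + 1) f) x‖
      ≤ 1 * (C * (k + 1 + m)! * L ^ (k + 1 + m)) := by
        gcongr
        exact hb (k + 1) m
    _ = C * L * (((k + m : ℕ) + 1) * (k + m)!) * L ^ (k + m) := by
        rw [show k + 1 + m = k + m + 1 by ring, Nat.factorial_succ, pow_succ]
        push_cast
        ring
    _ ≤ C * L * (2 ^ (k + m) * (k + m)!) * L ^ (k + m) := by gcongr
    _ = C * L * (k + m)! * (2 * L) ^ (k + m) := by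
        rw [mul_pow]
        ring

theorem eventually_analyticAt_normalDeriv_succ_div (hf : AnalyticAt ℝ f (0, x)) :
    ∀ᶠ y in 𝓝 x, ∀ k : ℕ, AnalyticAt ℝ (fun y => normalDeriv (k + 1) f y / (k + 1)) y := by
  filter_upwards [eventually_analyticAt_zero_prod hf] with y hy k
    using (analyticAt_normalDeriv hy _).div_const

theorem analyticAt_normalQuotient (hf : AnalyticAt ℝ f (0, x)) :
    AnalyticAt ℝ (normalQuotient f) (0, x) := by
  obtain ⟨M, L, hM, hL, hb⟩ := exists_norm_iteratedFDeriv_normalDeriv_succ_div_le hf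
  exact analyticAt_normalSeries hM hL (eventually_analyticAt_normalDeriv_succ_div hf) hb

theorem eventually_fst_mul_normalQuotient (hf : AnalyticAt ℝ f (0, x))
    (hf₀ : ∀ᶠ y in 𝓝 x, f (0, y) = 0) : ∀ᶠ z in 𝓝 (0, x), z.1 * normalQuotient f z = f z := by
  have hmul (y : E) (hy : AnalyticAt ℝ f (0, y)) :
      AnalyticAt ℝ (fun z => z.1 * normalQuotient f z) (0, y) :=
    analyticAt_fst.fun_mul (analyticAt_normalQuotient hy)
  obtain ⟨M, L, hM, hL, hb⟩ := exists_norm_iteratedFDeriv_normalDeriv_succ_div_le hf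
  refine (eventuallyEq_zero_of_normalDeriv_eq_zero ((hmul x hf).fun_sub hf) ?_).mono
    fun z hz => sub_eq_zero.1 hz
  filter_upwards [eventually_analyticAt_zero_prod hf, hf₀, eventually_normalDeriv_normalSeries hM hL
    (eventually_analyticAt_normalDeriv_succ_div hf) hb] with y hy hy₀ hjet k
  rw [normalDeriv_fun_sub (hmul y hy) hy, normalDeriv_fst_mul (analyticAt_normalQuotient hy)]
  rcases k with _ | k
  · simp [normalDeriv, hy₀]
  · rw [Nat.add_sub_cancel, normalQuotient, hjet k]
    push_cast
    rw [mul_div_cancel₀ _ (by positivity), sub_self]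

end NormalSeries

section NormalJets

variable {E : Type*} [NormedAddCommGroup E] [NormedSpace ℝ E] {x : E} {K : ℕ}
  {f g f' g' : ℝ × E → ℝ}

/-- Two functions, analytic at `(0, x)`, have the same normal derivatives of order less than `K`
along `s = 0` near `x`; that is, they agree modulo `s ^ K`. -/
structure NormalJetEq (x : E) (K : ℕ) (f g : ℝ × E → ℝ) : Prop where
  analyticAt_left : AnalyticAt ℝ f (0, x)
  analyticAt_right : AnalyticAt ℝ g (0, x)
  normalDeriv_eq : ∀ k < K, normalDeriv k f =ᶠ[𝓝 x] normalDeriv k g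

namespace NormalJetEq

theorem rfl (hf : AnalyticAt ℝ f (0, x)) : NormalJetEq x K f f :=
  ⟨hf, hf, fun _ _ => EventuallyEq.rfl⟩

theorem fun_add (hf : NormalJetEq x K f f') (hg : NormalJetEq x K g g') :
    NormalJetEq x K (fun z => f z + g z) (fun z => f' z + g' z) where
  analyticAt_left := hf.analyticAt_left.fun_add hg.analyticAt_left
  analyticAt_right := hf.analyticAt_right.fun_add hg.analyticAt_right
  normalDeriv_eq k hk := by
    filter_upwards [hf.normalDeriv_eq k hk, hg.normalDeriv_eq k hk,
      eventually_analyticAt_zero_prod hf.analyticAt_left,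
      eventually_analyticAt_zero_prod hf.analyticAt_right,
      eventually_analyticAt_zero_prod hg.analyticAt_left,
      eventually_analyticAt_zero_prod hg.analyticAt_right] with y hfy hgy hf₁ hf₂ hg₁ hg₂
    rw [normalDeriv_fun_add hf₁ hg₁, normalDeriv_fun_add hf₂ hg₂, hfy, hgy]

theorem fun_sum {ι : Type*} (s : Finset ι) {f f' : ι → ℝ × E → ℝ}
    (h : ∀ i ∈ s, NormalJetEq x K (f i) (f' i)) :
    NormalJetEq x K (fun z => ∑ i ∈ s, f i z) (fun z => ∑ i ∈ s, f' i z) := by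
  classical
  induction s using Finset.induction_on with
  | empty => simpa using rfl analyticAt_const
  | insert i s hi ih =>
    simp only [Finset.sum_insert hi]
    exact (h i (Finset.mem_insert_self i s)).fun_add
      (ih fun j hj => h j (Finset.mem_insert_of_mem hj))

theorem fun_mul (hf : NormalJetEq x K f f') (hg : NormalJetEq x K g g') :
    NormalJetEq x K (fun z => f z * g z) (fun z => f' z * g' z) where
  analyticAt_left := hf.analyticAt_left.fun_mul hg.analyticAt_left
  analyticAt_right := hf.analyticAt_right.fun_mul hg.analyticAt_right
  normalDeriv_eq k hk := by
    filter_upwards [(Set.finite_lt_nat K).eventually_all.2 hf.normalDeriv_eq,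
      (Set.finite_lt_nat K).eventually_all.2 hg.normalDeriv_eq,
      eventually_analyticAt_zero_prod hf.analyticAt_left,
      eventually_analyticAt_zero_prod hf.analyticAt_right,
      eventually_analyticAt_zero_prod hg.analyticAt_left,
      eventually_analyticAt_zero_prod hg.analyticAt_right] with y hfy hgy hf₁ hf₂ hg₁ hg₂
    rw [normalDeriv_fun_mul hf₁ hg₁, normalDeriv_fun_mul hf₂ hg₂]
    refine Finset.sum_congr (Eq.refl _) fun ij hij => ?_
    have hfi := hfy ij.1 ((antidiagonal.fst_le hij).trans_lt hk)
    have hgj := hgy ij.2 ((antidiagonal.snd_le hij).trans_lt hk)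
    simp only [hfi, hgj]

theorem fst_mul (hf : NormalJetEq x K f f') :
    NormalJetEq x (K + 1) (fun z => z.1 * f z) (fun z => z.1 * f' z) where
  analyticAt_left := analyticAt_fst.fun_mul hf.analyticAt_left
  analyticAt_right := analyticAt_fst.fun_mul hf.analyticAt_right
  normalDeriv_eq k hk := by
    filter_upwards [eventually_analyticAt_zero_prod hf.analyticAt_left,
      eventually_analyticAt_zero_prod hf.analyticAt_right,
      (Set.finite_lt_nat K).eventually_all.2 hf.normalDeriv_eq] with y hf₁ hf₂ hfy
    rw [normalDeriv_fst_mul hf₁, normalDeriv_fst_mul hf₂]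
    rcases k with _ | k
    · simp
    · rw [Nat.add_sub_cancel, hfy k (Nat.lt_of_succ_lt_succ hk)]

theorem dirDeriv_normal (hf : NormalJetEq x (K + 1) f f') :
    NormalJetEq x K (dirDeriv (1, 0) f) (dirDeriv (1, 0) f') where
  analyticAt_left := analyticAt_dirDeriv hf.analyticAt_left
  analyticAt_right := analyticAt_dirDeriv hf.analyticAt_right
  normalDeriv_eq k hk := by
    filter_upwards [eventually_analyticAt_zero_prod hf.analyticAt_left,
      eventually_analyticAt_zero_prod hf.analyticAt_right,
      hf.normalDeriv_eq (k + 1) (Nat.succ_lt_succ hk)] with y hf₁ hf₂ hfy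
    rw [normalDeriv_dirDeriv_normal hf₁, normalDeriv_dirDeriv_normal hf₂, hfy]

theorem dirDeriv_tangential (hf : NormalJetEq x K f f') (e : E) :
    NormalJetEq x K (dirDeriv (0, e) f) (dirDeriv (0, e) f') where
  analyticAt_left := analyticAt_dirDeriv hf.analyticAt_left
  analyticAt_right := analyticAt_dirDeriv hf.analyticAt_right
  normalDeriv_eq k hk := by
    filter_upwards [eventually_analyticAt_zero_prod hf.analyticAt_left,
      eventually_analyticAt_zero_prod hf.analyticAt_right,
      dirDeriv_congr (v := e) (hf.normalDeriv_eq k hk)] with y hf₁ hf₂ hfy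
    rw [normalDeriv_dirDeriv_tangential hf₁, normalDeriv_dirDeriv_tangential hf₂, hfy]

theorem mono {K' : ℕ} (h : NormalJetEq x K f g) (hK : K' ≤ K) : NormalJetEq x K' f g :=
  ⟨h.1, h.2, fun k hk => h.3 k (hk.trans_le hK)⟩

end NormalJetEq

end NormalJets

section MajorizedJets

variable {E : Type*} [NormedAddCommGroup E] [NormedSpace ℝ E] {x e : E} {K p q : ℕ}
  {l ρ c c' : ℝ} {f g : ℝ × E → ℝ}

/-- The quantitative analyticity class of the majorant method: the normal derivatives of `f` of
order `k < K` have `m`-th derivatives at `x` bounded by `c lᵏ majorant ρ (k + m + p)`. The order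
`p` counts the derivatives lost, so that a derivation raises `p` by one. -/
structure IsMajorized (l ρ : ℝ) (x : E) (K : ℕ) (c : ℝ) (p : ℕ) (f : ℝ × E → ℝ) : Prop where
  analyticAt : AnalyticAt ℝ f (0, x)
  norm_le : ∀ k < K, ∀ m,
    ‖iteratedFDeriv ℝ m (normalDeriv k f) x‖ ≤ c * l ^ k * majorant ρ (k + m + p)

theorem eventually_isMajorized (hf : AnalyticAt ℝ f (0, x)) :
    ∀ᶠ P : ℝ × ℝ in atTop, ∀ K l, 1 ≤ l → IsMajorized l P.2 x K P.1 0 f := by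
  obtain ⟨C, L, hC, hL, hb⟩ := exists_norm_iteratedFDeriv_normalDeriv_le hf
  filter_upwards [eventually_ge_atTop (C, 4 * L)] with P hP K l hl
  obtain ⟨hP₁, hP₂⟩ : C ≤ P.1 ∧ 4 * L ≤ P.2 := hP
  refine ⟨hf, fun k _ m => ?_⟩
  calc ‖iteratedFDeriv ℝ m (normalDeriv k f) x‖ ≤ C * 1 * ((k + m)! * L ^ (k + m)) := by
        rw [mul_one, ← mul_assoc]
        exact hb k m
    _ ≤ P.1 * l ^ k * majorant P.2 (k + m + 0) := by
        have hP : 0 ≤ P.1 := hC.le.trans hP₁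
        gcongr
        · exact one_le_pow₀ hl
        · exact factorial_mul_pow_le_majorant (by linarith) hP₂ _

theorem norm_iteratedFDeriv_binomConv_le {A B : ℕ → E → ℝ} {k : ℕ}
    (hA : ∀ j ≤ k, AnalyticAt ℝ (A j) x) (hB : ∀ j ≤ k, AnalyticAt ℝ (B j) x) (m : ℕ) :
    ‖iteratedFDeriv ℝ m (fun y => binomConv (fun i => A i y) (fun j => B j y) k) x‖ ≤
      ∑ ij ∈ antidiagonal k, k.choose ij.1 *
        binomConv (fun i => ‖iteratedFDeriv ℝ i (A ij.1) x‖)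
          (fun j => ‖iteratedFDeriv ℝ j (B ij.2) x‖) m := by
  have hA' : ∀ ij ∈ antidiagonal k, AnalyticAt ℝ (A ij.1) x := fun ij hij =>
    hA _ (antidiagonal.fst_le hij)
  have hB' : ∀ ij ∈ antidiagonal k, AnalyticAt ℝ (B ij.2) x := fun ij hij =>
    hB _ (antidiagonal.snd_le hij)
  unfold binomConv
  rw [iteratedFDeriv_fun_sum_apply fun ij hij => (analyticAt_const.fun_mul
    ((hA' ij hij).fun_mul (hB' ij hij))).contDiffAt]
  refine norm_sum_le_of_le _ fun ij hij => ?_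
  have hsmul := iteratedFDeriv_const_smul_apply (𝕜 := ℝ) (i := m) (a := (k.choose ij.1 : ℝ))
    ((hA' ij hij).fun_mul (hB' ij hij)).contDiffAt
  calc ‖iteratedFDeriv ℝ m (fun y => k.choose ij.1 * (A ij.1 y * B ij.2 y)) x‖
      = k.choose ij.1 * ‖iteratedFDeriv ℝ m (fun y => A ij.1 y * B ij.2 y) x‖ := by
        rw [← Real.norm_natCast (k.choose ij.1), ← norm_smul, ← hsmul, Real.norm_natCast]
        rfl
    _ ≤ _ := mul_le_mul_of_nonneg_left
        (norm_iteratedFDeriv_fun_mul_le_binomConv (hA' ij hij) (hB' ij hij) m) (Nat.cast_nonneg _)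

namespace IsMajorized

theorem mono {K' : ℕ} (hf : IsMajorized l ρ x K c p f) (hK : K' ≤ K) :
    IsMajorized l ρ x K' c p f :=
  ⟨hf.analyticAt, fun k hk => hf.norm_le k (hk.trans_le hK)⟩

theorem weaken (hf : IsMajorized l ρ x K c p f) (hl : 0 ≤ l) (hρ : 4 ≤ ρ) (hc : 0 ≤ c)
    (hcc' : c ≤ c') (hpq : p ≤ q) : IsMajorized l ρ x K c' q f := by
  refine ⟨hf.analyticAt, fun k hk m => (hf.norm_le k hk m).trans ?_⟩
  have hle : majorant ρ (k + m + p) ≤ majorant ρ (k + m + q) := monotone_majorant hρ (by omega)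
  have h0 : 0 ≤ majorant ρ (k + m + p) := majorant_nonneg (by linarith) _
  have hc' : 0 ≤ c' := hc.trans hcc'
  gcongr

theorem fun_add (hf : IsMajorized l ρ x K c p f) (hg : IsMajorized l ρ x K c' p g) :
    IsMajorized l ρ x K (c + c') p (fun z => f z + g z) := by
  refine ⟨hf.analyticAt.fun_add hg.analyticAt, fun k hk m => ?_⟩
  have heq : normalDeriv k (fun z => f z + g z) =ᶠ[𝓝 x]
      normalDeriv k f + normalDeriv k g := by
    filter_upwards [eventually_analyticAt_zero_prod hf.analyticAt,
      eventually_analyticAt_zero_prod hg.analyticAt] with y hfy hgy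
      using normalDeriv_fun_add hfy hgy k
  rw [(heq.iteratedFDeriv ℝ m).eq_of_nhds, iteratedFDeriv_add_apply
    (analyticAt_normalDeriv hf.analyticAt k).contDiffAt
    (analyticAt_normalDeriv hg.analyticAt k).contDiffAt, add_mul, add_mul]
  exact norm_add_le_of_le (hf.norm_le k hk m) (hg.norm_le k hk m)

theorem fun_sum {ι : Type*} (s : Finset ι) {f : ι → ℝ × E → ℝ}
    (h : ∀ i ∈ s, IsMajorized l ρ x K c p (f i)) :
    IsMajorized l ρ x K (s.card * c) p (fun z => ∑ i ∈ s, f i z) := by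
  classical
  induction s using Finset.induction_on with
  | empty =>
    have hzero (k : ℕ) : normalDeriv k (fun _ : ℝ × E => (0 : ℝ)) = 0 := by
      funext y
      simp [normalDeriv]
    exact ⟨by simpa using analyticAt_const, fun k _ m => by simp [hzero]⟩
  | insert i s hi ih =>
    simp only [Finset.sum_insert hi, Finset.card_insert_of_notMem hi]
    rw [Nat.cast_add_one, add_one_mul, add_comm]
    exact (h i (Finset.mem_insert_self i s)).fun_add
      (ih fun j hj => h j (Finset.mem_insert_of_mem hj))

theorem fun_mul (hf : IsMajorized l ρ x K c p f) (hg : IsMajorized l ρ x K c' q g)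
    (hl : 0 ≤ l) (hρ : 0 ≤ ρ) (hc : 0 ≤ c) (hc' : 0 ≤ c') :
    IsMajorized l ρ x K (8 * c * c') (p + q) (fun z => f z * g z) := by
  refine ⟨hf.analyticAt.fun_mul hg.analyticAt, fun k hk m => ?_⟩
  have heq : normalDeriv k (fun z => f z * g z) =ᶠ[𝓝 x]
      fun y => binomConv (fun i => normalDeriv i f y) (fun j => normalDeriv j g y) k := by
    filter_upwards [eventually_analyticAt_zero_prod hf.analyticAt,
      eventually_analyticAt_zero_prod hg.analyticAt] with y hfy hgy
      using normalDeriv_fun_mul hfy hgy k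
  rw [(heq.iteratedFDeriv ℝ m).eq_of_nhds]
  have inner_le : ∀ ij ∈ antidiagonal k,
      binomConv (fun i => ‖iteratedFDeriv ℝ i (normalDeriv ij.1 f) x‖)
          (fun j => ‖iteratedFDeriv ℝ j (normalDeriv ij.2 g) x‖) m ≤
        c * c' * l ^ k * ∑ ab ∈ antidiagonal m, m.choose ab.1 *
          (majorant ρ (ij.1 + ab.1 + p) * majorant ρ (ij.2 + ab.2 + q)) := by
    intro ij hij
    have h := binomConv_le_mul_binomConv (fun _ => norm_nonneg _) (fun _ => norm_nonneg _)
      (hf.norm_le ij.1 ((antidiagonal.fst_le hij).trans_lt hk))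
      (hg.norm_le ij.2 ((antidiagonal.snd_le hij).trans_lt hk)) m
    refine h.trans_eq ?_
    rw [← mem_antidiagonal.1 hij, pow_add, binomConv]
    ring
  calc ‖iteratedFDeriv ℝ m (fun y => binomConv (fun i => normalDeriv i f y)
          (fun j => normalDeriv j g y) k) x‖
      ≤ ∑ ij ∈ antidiagonal k, k.choose ij.1 * (c * c' * l ^ k * ∑ ab ∈ antidiagonal m,
          m.choose ab.1 * (majorant ρ (ij.1 + ab.1 + p) * majorant ρ (ij.2 + ab.2 + q))) :=
        (norm_iteratedFDeriv_binomConv_le (fun j _ => analyticAt_normalDeriv hf.analyticAt j)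
          (fun j _ => analyticAt_normalDeriv hg.analyticAt j) m).trans
          (Finset.sum_le_sum fun ij hij =>
            mul_le_mul_of_nonneg_left (inner_le ij hij) (Nat.cast_nonneg _))
    _ = c * c' * l ^ k * binomConv (fun i => majorant ρ (i + p)) (fun j => majorant ρ (j + q))
          (k + m) := by
        rw [binomConv, ← sum_choose_mul_sum_choose_mul k m fun i j =>
          majorant ρ (i + p) * majorant ρ (j + q), Finset.mul_sum]
        exact Finset.sum_congr rfl fun ij _ => mul_left_comm _ _ _
    _ ≤ c * c' * l ^ k * (8 * majorant ρ (k + m + (p + q))) := by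
        gcongr
        exact binomConv_majorant_add_le hρ p q (k + m)
    _ = _ := by ring

theorem dirDeriv_normal (hf : IsMajorized l ρ x (K + 1) c p f) :
    IsMajorized l ρ x K (l * c) (p + 1) (dirDeriv (1, 0) f) := by
  refine ⟨analyticAt_dirDeriv hf.analyticAt, fun k hk m => ?_⟩
  have heq : normalDeriv k (dirDeriv (1, 0) f) =ᶠ[𝓝 x] normalDeriv (k + 1) f := by
    filter_upwards [eventually_analyticAt_zero_prod hf.analyticAt] with y hfy
      using normalDeriv_dirDeriv_normal hfy k
  rw [(heq.iteratedFDeriv ℝ m).eq_of_nhds]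
  calc ‖iteratedFDeriv ℝ m (normalDeriv (k + 1) f) x‖
      ≤ c * l ^ (k + 1) * majorant ρ (k + 1 + m + p) :=
        hf.norm_le (k + 1) (Nat.succ_lt_succ hk) m
    _ = l * c * l ^ k * majorant ρ (k + m + (p + 1)) := by
        rw [show k + 1 + m + p = k + m + (p + 1) by ring]; ring

theorem dirDeriv_tangential (hf : IsMajorized l ρ x K c p f) (he : ‖e‖ ≤ 1) :
    IsMajorized l ρ x K c (p + 1) (dirDeriv (0, e) f) := by
  refine ⟨analyticAt_dirDeriv hf.analyticAt, fun k hk m => ?_⟩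
  have heq : normalDeriv k (dirDeriv (0, e) f) =ᶠ[𝓝 x] dirDeriv e (normalDeriv k f) := by
    filter_upwards [eventually_analyticAt_zero_prod hf.analyticAt] with y hfy
      using normalDeriv_dirDeriv_tangential hfy e k
  rw [(heq.iteratedFDeriv ℝ m).eq_of_nhds]
  calc ‖iteratedFDeriv ℝ m (dirDeriv e (normalDeriv k f)) x‖
      ≤ ‖iteratedFDeriv ℝ (m + 1) (normalDeriv k f) x‖ :=
        norm_iteratedFDeriv_dirDeriv_le (analyticAt_normalDeriv hf.analyticAt k) he m
    _ ≤ c * l ^ k * majorant ρ (k + (m + 1) + p) := hf.norm_le k hk (m + 1)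
    _ = c * l ^ k * majorant ρ (k + m + (p + 1)) := by
        rw [show k + (m + 1) + p = k + m + (p + 1) by ring]

theorem norm_normalDeriv_fst_mul_le (hf : IsMajorized l ρ x K (l * c) (p + 1) f) {k : ℕ}
    (hk : k < K + 1) (m : ℕ) :
    ‖iteratedFDeriv ℝ m (normalDeriv k (fun z => z.1 * f z)) x‖ ≤
      k * (c * l ^ k * majorant ρ (k + m + p)) := by
  have heq : normalDeriv k (fun z => z.1 * f z) =ᶠ[𝓝 x] (k : ℝ) • normalDeriv (k - 1) f := by
    filter_upwards [eventually_analyticAt_zero_prod hf.analyticAt] with y hfy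
      using normalDeriv_fst_mul hfy k
  rw [(heq.iteratedFDeriv ℝ m).eq_of_nhds, iteratedFDeriv_const_smul_apply
    (analyticAt_normalDeriv hf.analyticAt _).contDiffAt, norm_smul, Real.norm_natCast]
  rcases k with _ | k
  · simp
  · rw [Nat.add_sub_cancel]
    gcongr
    calc ‖iteratedFDeriv ℝ m (normalDeriv k f) x‖
        ≤ l * c * l ^ k * majorant ρ (k + m + (p + 1)) :=
          hf.norm_le k (Nat.lt_of_succ_lt_succ hk) m
      _ = c * l ^ (k + 1) * majorant ρ (k + 1 + m + p) := by
          rw [show k + 1 + m + p = k + m + (p + 1) by ring]; ring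

end IsMajorized

end MajorizedJets

/-- A semilinear Fuchsian equation
`s Wₛₛ + 2 Wₛ = s (∑ Aᵢᵤ ∂ᵢ∂ᵤW + ∑ cᵤᵥ ∂ᵤW ∂ᵥW + ∑ γᵤ ∂ᵤW) + ∑ δᵢ ∂ᵢW + g` in `ℝ × E`, given by its
tangential directions and coefficients. The index `0 : Fin (n + 1)` stands for `∂ₛ` and `i.succ`
for the derivative along `dir i`. -/
structure FuchsianEquation (E : Type*) (n : ℕ) where
  dir : Fin n → E
  second : Fin n → Fin (n + 1) → ℝ × E → ℝ
  quadratic : Fin (n + 1) → Fin (n + 1) → ℝ × E → ℝ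
  linear : Fin (n + 1) → ℝ × E → ℝ
  tangential : Fin n → ℝ × E → ℝ
  source : ℝ × E → ℝ

namespace FuchsianEquation

variable {E : Type*} {n : ℕ}

/-- All coefficients of the equation satisfy `P`. -/
structure ForallCoeff (F : FuchsianEquation E n) (P : (ℝ × E → ℝ) → Prop) : Prop where
  second : ∀ i μ, P (F.second i μ)
  quadratic : ∀ μ ν, P (F.quadratic μ ν)
  linear : ∀ μ, P (F.linear μ)
  tangential : ∀ i, P (F.tangential i)
  source : P F.source

theorem ForallCoeff.imp {F : FuchsianEquation E n} {P Q : (ℝ × E → ℝ) → Prop}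
    (h : F.ForallCoeff P) (hPQ : ∀ f, P f → Q f) : F.ForallCoeff Q :=
  ⟨fun i μ => hPQ _ (h.second i μ), fun μ ν => hPQ _ (h.quadratic μ ν),
    fun μ => hPQ _ (h.linear μ), fun i => hPQ _ (h.tangential i), hPQ _ h.source⟩

theorem ForallCoeff.eventually {F : FuchsianEquation E n} {T : Type*} {l : Filter T}
    {P : T → (ℝ × E → ℝ) → Prop} (h : F.ForallCoeff fun f => ∀ᶠ t in l, P t f) :
    ∀ᶠ t in l, F.ForallCoeff (P t) := by
  filter_upwards [eventually_all.2 fun i => eventually_all.2 (h.second i),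
    eventually_all.2 fun μ => eventually_all.2 (h.quadratic μ), eventually_all.2 h.linear,
    eventually_all.2 h.tangential, h.source] with t h₁ h₂ h₃ h₄ h₅ using ⟨h₁, h₂, h₃, h₄, h₅⟩

variable [NormedAddCommGroup E] [NormedSpace ℝ E] {F : FuchsianEquation E n} {x : E}
  {W W' : ℝ × E → ℝ} {K : ℕ}

/-- The frame of `ℝ × E` formed by the normal direction and the directions `dir i`. -/
def frame (F : FuchsianEquation E n) : Fin (n + 1) → ℝ × E :=
  Fin.cons (1, 0) fun i => (0, F.dir i)

/-- The terms of the equation that carry a factor `s`, with this factor removed. -/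
noncomputable def secondOrderPart (F : FuchsianEquation E n) (W : ℝ × E → ℝ) : ℝ × E → ℝ :=
  fun z => (∑ i, ∑ μ, F.second i μ z * dirDeriv (0, F.dir i) (dirDeriv (F.frame μ) W) z +
    ∑ μ, ∑ ν, F.quadratic μ ν z * (dirDeriv (F.frame μ) W z * dirDeriv (F.frame ν) W z)) +
    ∑ μ, F.linear μ z * dirDeriv (F.frame μ) W z

/-- The terms of the equation that carry no factor `s`. -/
noncomputable def firstOrderPart (F : FuchsianEquation E n) (W : ℝ × E → ℝ) : ℝ × E → ℝ :=
  fun z => ∑ i, F.tangential i z * dirDeriv (0, F.dir i) W z + F.source z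

/-- The right-hand side of the equation. -/
noncomputable def rhs (F : FuchsianEquation E n) (W : ℝ × E → ℝ) : ℝ × E → ℝ :=
  fun z => z.1 * F.secondOrderPart W z + F.firstOrderPart W z

section Causality

theorem normalJetEq_dirDeriv_frame (h : NormalJetEq x (K + 1) W W') (μ : Fin (n + 1)) :
    NormalJetEq x K (dirDeriv (F.frame μ) W) (dirDeriv (F.frame μ) W') := by
  refine Fin.cases ?_ (fun i => ?_) μ
  · exact h.dirDeriv_normal
  · exact (h.mono K.le_succ).dirDeriv_tangential (F.dir i)

theorem normalJetEq_secondOrderPart (hF : F.ForallCoeff (AnalyticAt ℝ · (0, x)))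
    (h : NormalJetEq x (K + 1) W W') :
    NormalJetEq x K (F.secondOrderPart W) (F.secondOrderPart W') := by
  have hd := normalJetEq_dirDeriv_frame (F := F) h
  refine (NormalJetEq.fun_add ?_ ?_).fun_add ?_
  · exact .fun_sum _ fun i _ => .fun_sum _ fun μ _ =>
      (NormalJetEq.rfl (hF.second i μ)).fun_mul ((hd μ).dirDeriv_tangential _)
  · exact .fun_sum _ fun μ _ => .fun_sum _ fun ν _ =>
      (NormalJetEq.rfl (hF.quadratic μ ν)).fun_mul ((hd μ).fun_mul (hd ν))
  · exact .fun_sum _ fun μ _ => (NormalJetEq.rfl (hF.linear μ)).fun_mul (hd μ)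

theorem normalJetEq_firstOrderPart (hF : F.ForallCoeff (AnalyticAt ℝ · (0, x)))
    (h : NormalJetEq x K W W') :
    NormalJetEq x K (F.firstOrderPart W) (F.firstOrderPart W') :=
  .fun_add (.fun_sum _ fun i _ => (NormalJetEq.rfl (hF.tangential i)).fun_mul
    (h.dirDeriv_tangential _)) (.rfl hF.source)

theorem normalJetEq_rhs (hF : F.ForallCoeff (AnalyticAt ℝ · (0, x)))
    (h : NormalJetEq x (K + 1) W W') : NormalJetEq x (K + 1) (F.rhs W) (F.rhs W') :=
  (normalJetEq_secondOrderPart hF h).fst_mul.fun_add (normalJetEq_firstOrderPart hF h)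

theorem analyticAt_rhs (hF : F.ForallCoeff (AnalyticAt ℝ · (0, x)))
    (hW : AnalyticAt ℝ W (0, x)) : AnalyticAt ℝ (F.rhs W) (0, x) :=
  (normalJetEq_rhs (K := 0) hF (.rfl hW)).analyticAt_left

end Causality

section MajorantBounds

variable {l ρ C M : ℝ}

theorem isMajorized_dirDeriv_frame (hdir : ∀ i, ‖F.dir i‖ ≤ 1) (hl : 1 ≤ l) (hρ : 4 ≤ ρ)
    (hM : 0 ≤ M) (hW : IsMajorized l ρ x (K + 1) M 0 W) (μ : Fin (n + 1)) :
    IsMajorized l ρ x K (l * M) 1 (dirDeriv (F.frame μ) W) := by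
  refine Fin.cases ?_ (fun i => ?_) μ
  · exact hW.dirDeriv_normal
  · exact ((hW.mono K.le_succ).dirDeriv_tangential (hdir i)).weaken (by linarith) hρ hM
      (le_mul_of_one_le_left hM hl) le_rfl

theorem isMajorized_secondOrderPart (hdir : ∀ i, ‖F.dir i‖ ≤ 1) (hl : 1 ≤ l) (hρ : 4 ≤ ρ)
    (hC : 0 ≤ C) (hM : 0 ≤ M) (hF : F.ForallCoeff (IsMajorized l ρ x K C 0))
    (hW : IsMajorized l ρ x (K + 1) M 0 W) :
    IsMajorized l ρ x K (8 * ((n + 1) ^ 2 * C) * (l * M) * (1 + 8 * (l * M))) 2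
      (F.secondOrderPart W) := by
  have hl₀ : 0 ≤ l := by linarith
  have hρ₀ : 0 ≤ ρ := by linarith
  have hlM : 0 ≤ l * M := mul_nonneg hl₀ hM
  have hd := isMajorized_dirDeriv_frame hdir hl hρ hM hW
  have second_term := IsMajorized.fun_sum Finset.univ fun i _ =>
    IsMajorized.fun_sum Finset.univ fun μ _ => (hF.second i μ).fun_mul
      ((hd μ).dirDeriv_tangential (hdir i)) hl₀ hρ₀ hC hlM
  have quadratic_term := IsMajorized.fun_sum Finset.univ fun μ _ =>
    IsMajorized.fun_sum Finset.univ fun ν _ => (hF.quadratic μ ν).fun_mul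
      ((hd μ).fun_mul (hd ν) hl₀ hρ₀ hlM hlM) hl₀ hρ₀ hC (by positivity)
  have linear_term := IsMajorized.fun_sum Finset.univ fun μ _ =>
    ((hF.linear μ).fun_mul (hd μ) hl₀ hρ₀ hC hlM).weaken (q := 2) hl₀ hρ (by positivity) le_rfl
      (by norm_num)
  convert (second_term.fun_add quadratic_term).fun_add linear_term using 1
  · simp only [Finset.card_univ, Fintype.card_fin, Nat.cast_add, Nat.cast_one]
    ring
  · rfl

theorem isMajorized_firstOrderPart (hdir : ∀ i, ‖F.dir i‖ ≤ 1) (hl : 0 ≤ l) (hρ : 4 ≤ ρ)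
    (hC : 0 ≤ C) (hM : 0 ≤ M) (hF : F.ForallCoeff (IsMajorized l ρ x K C 0))
    (hW : IsMajorized l ρ x K M 0 W) :
    IsMajorized l ρ x K (n * (8 * C * M) + C) 1 (F.firstOrderPart W) := by
  have tangential_term := IsMajorized.fun_sum Finset.univ fun i _ => (hF.tangential i).fun_mul
    (hW.dirDeriv_tangential (hdir i)) hl (by linarith) hC hM
  rw [Finset.card_univ, Fintype.card_fin] at tangential_term
  exact tangential_term.fun_add (hF.source.weaken hl hρ hC le_rfl zero_le_one)

/-- The compatibility of the constants under which the recursion preserves the bounds: the right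
hand side is at most half the size of the left-hand side. -/
structure MajorantConstants (P l M : ℝ) : Prop where
  pos : 0 < M
  one_le : 1 ≤ l
  secondOrder_le : 8 * P * (1 + 8 * (l * M)) ≤ l / 2
  firstOrder_le : 8 * P * M + P ≤ l * M / 2

theorem exists_majorantConstants {P : ℝ} (hP : 0 < P) : ∃ l M, MajorantConstants P l M := by
  refine ⟨32 * P + 512 * P ^ 2 + 1, 1 / (256 * P), by positivity, ?_, ?_, ?_⟩
  · nlinarith
  · field_simp
    nlinarith
  · field_simp
    nlinarith

theorem MajorantConstants.natCast_mul_add_le (hC : 0 ≤ C)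
    (hlM : MajorantConstants ((n + 1) ^ 2 * C) l M) : n * (8 * C * M) + C ≤ l * M / 2 := by
  have hM := hlM.pos
  have hn : (n : ℝ) ≤ (n + 1) ^ 2 := by nlinarith
  have hC_le : C ≤ (n + 1) ^ 2 * C := by nlinarith [mul_nonneg n.cast_nonneg' hC]
  calc n * (8 * C * M) + C ≤ (n + 1) ^ 2 * (8 * C * M) + (n + 1) ^ 2 * C := by gcongr
    _ = 8 * ((n + 1) ^ 2 * C) * M + (n + 1) ^ 2 * C := by ring
    _ ≤ l * M / 2 := hlM.firstOrder_le

theorem norm_iteratedFDeriv_normalDeriv_rhs_le (hdir : ∀ i, ‖F.dir i‖ ≤ 1) (hρ : 4 ≤ ρ)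
    (hC : 0 ≤ C) (hlM : MajorantConstants ((n + 1) ^ 2 * C) l M) {k : ℕ}
    (hF : F.ForallCoeff (IsMajorized l ρ x (k + 1) C 0))
    (hW : IsMajorized l ρ x (k + 1) M 0 W) (m : ℕ) :
    ‖iteratedFDeriv ℝ m (normalDeriv k (F.rhs W)) x‖ ≤
      (k + 2) * (M * l ^ (k + 1) * majorant ρ (k + 1 + m)) := by
  have hM := hlM.pos
  have hl := hlM.one_le
  have hl₀ : 0 ≤ l := by linarith
  have hH_const : 8 * ((n + 1) ^ 2 * C) * (l * M) * (1 + 8 * (l * M)) ≤ l * (l * M / 2) := by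
    linear_combination l * M * hlM.secondOrder_le
  have hH := (isMajorized_secondOrderPart hdir hl hρ hC hM.le
    (hF.imp fun f hf => hf.mono k.le_succ) hW).weaken hl₀ hρ (by positivity) hH_const le_rfl
  have hQ := (isMajorized_firstOrderPart hdir hl₀ hρ hC hM.le hF hW).weaken hl₀ hρ
    (by positivity) (hlM.natCast_mul_add_le hC) le_rfl
  have heq : normalDeriv k (F.rhs W) =ᶠ[𝓝 x]
      normalDeriv k (fun z => z.1 * F.secondOrderPart W z) +
        normalDeriv k (F.firstOrderPart W) := by
    filter_upwards [eventually_analyticAt_zero_prod (analyticAt_fst.fun_mul hH.analyticAt),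
      eventually_analyticAt_zero_prod hQ.analyticAt] with y hHy hQy
      using normalDeriv_fun_add hHy hQy k
  rw [(heq.iteratedFDeriv ℝ m).eq_of_nhds, iteratedFDeriv_add_apply
    (analyticAt_normalDeriv (analyticAt_fst.fun_mul hH.analyticAt) k).contDiffAt
    (analyticAt_normalDeriv hQ.analyticAt k).contDiffAt]
  refine (norm_add_le_of_le (hH.norm_normalDeriv_fst_mul_le k.lt_succ_self m)
    (hQ.norm_le k k.lt_succ_self m)).trans ?_
  have hnonneg : 0 ≤ l * M / 2 * l ^ k * majorant ρ (k + m + 1) :=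
    mul_nonneg (by positivity) (majorant_nonneg (by linarith) _)
  rw [show k + 1 + m = k + m + 1 by ring, pow_succ]
  nlinarith

end MajorantBounds

section Solution

variable {E : Type*} [NormedAddCommGroup E] [NormedSpace ℝ E] {n : ℕ} {F : FuchsianEquation E n}
  {x : E} {j k : ℕ}

/-- The solution of the Fuchsian equation modulo `s ^ (k + 1)`, with `W = 0` on `s = 0`. Comparing
the coefficients of `s ^ k` determines the next one, because `s Wₛₛ + 2 Wₛ` maps `s ^ (k + 1)` to
`(k + 1) (k + 2) s ^ k`. -/
noncomputable def partialSolution (F : FuchsianEquation E n) : ℕ → ℝ × E → ℝ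
  | 0 => fun _ => 0
  | k + 1 => fun z => F.partialSolution k z +
      normalDeriv k (F.rhs (F.partialSolution k)) z.2 / ((k + 2) * (k + 1)!) * z.1 ^ (k + 1)

/-- The `k`-th normal derivative on `s = 0` of the formal solution. -/
noncomputable def jet (F : FuchsianEquation E n) (k : ℕ) : E → ℝ :=
  normalDeriv k (F.partialSolution k)

/-- The solution of the Fuchsian equation near `s = 0` with `W = 0` on `s = 0`. -/
noncomputable def solution (F : FuchsianEquation E n) : ℝ × E → ℝ :=
  normalSeries F.jet

theorem ForallCoeff.eventually_analyticAt (hF : F.ForallCoeff (AnalyticAt ℝ · (0, x))) :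
    ∀ᶠ y in 𝓝 x, F.ForallCoeff (AnalyticAt ℝ · (0, y)) :=
  (hF.imp fun _ => eventually_analyticAt_zero_prod).eventually

theorem analyticAt_partialSolution (hF : F.ForallCoeff (AnalyticAt ℝ · (0, x))) (k : ℕ) :
    AnalyticAt ℝ (F.partialSolution k) (0, x) := by
  induction k with
  | zero => exact analyticAt_const
  | succ k ih =>
    have hG : AnalyticAt ℝ (fun z : ℝ × E => normalDeriv k (F.rhs (F.partialSolution k)) z.2)
        (0, x) :=
      (analyticAt_normalDeriv (analyticAt_rhs hF ih) k).comp_of_eq analyticAt_snd rfl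
    exact ih.fun_add (hG.div_const.fun_mul (analyticAt_fst.fun_pow (k + 1)))

theorem normalDeriv_partialSolution_succ (hF : F.ForallCoeff (AnalyticAt ℝ · (0, x))) (j k : ℕ) :
    normalDeriv j (F.partialSolution (k + 1)) x = normalDeriv j (F.partialSolution k) x +
      if j = k + 1 then normalDeriv k (F.rhs (F.partialSolution k)) x / (k + 2) else 0 := by
  have hG := analyticAt_normalDeriv (analyticAt_rhs hF (analyticAt_partialSolution hF k)) k
  have hterm : AnalyticAt ℝ (fun z : ℝ × E => normalDeriv k (F.rhs (F.partialSolution k)) z.2 /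
      ((k + 2) * (k + 1)!) * z.1 ^ (k + 1)) (0, x) :=
    (hG.comp_of_eq analyticAt_snd rfl).div_const.fun_mul (analyticAt_fst.fun_pow (k + 1))
  refine (normalDeriv_fun_add (analyticAt_partialSolution hF k) hterm j).trans ?_
  rw [normalDeriv_comp_snd_mul_pow
    (fun y => normalDeriv k (F.rhs (F.partialSolution k)) y / ((k + 2) * (k + 1)!))]
  congr 2
  field_simp

theorem normalDeriv_partialSolution_of_lt (hF : F.ForallCoeff (AnalyticAt ℝ · (0, x)))
    (h : k < j) : normalDeriv j (F.partialSolution k) x = 0 := by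
  induction k with
  | zero => simp [normalDeriv, partialSolution]
  | succ k ih =>
    rw [normalDeriv_partialSolution_succ hF, ih (by lia), if_neg (by lia), add_zero]

theorem normalDeriv_partialSolution_of_le (hF : F.ForallCoeff (AnalyticAt ℝ · (0, x)))
    (h : j ≤ k) : normalDeriv j (F.partialSolution k) x = F.jet j x := by
  induction k, h using Nat.le_induction with
  | base => rfl
  | succ k hjk ih =>
    rw [normalDeriv_partialSolution_succ hF, ih, if_neg (by lia), add_zero]

theorem jet_succ (hF : F.ForallCoeff (AnalyticAt ℝ · (0, x))) (k : ℕ) :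
    F.jet (k + 1) x = normalDeriv k (F.rhs (F.partialSolution k)) x / (k + 2) := by
  rw [jet, normalDeriv_partialSolution_succ hF,
    normalDeriv_partialSolution_of_lt hF k.lt_succ_self, if_pos rfl, zero_add]

section Convergence

variable {l ρ C M : ℝ}

theorem norm_iteratedFDeriv_jet_succ_le (hdir : ∀ i, ‖F.dir i‖ ≤ 1) (hρ : 4 ≤ ρ) (hC : 0 ≤ C)
    (hlM : MajorantConstants ((n + 1) ^ 2 * C) l M)
    (hF : F.ForallCoeff (AnalyticAt ℝ · (0, x)))
    (hFC : F.ForallCoeff (IsMajorized l ρ x (k + 1) C 0))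
    (hW : IsMajorized l ρ x (k + 1) M 0 (F.partialSolution k)) (m : ℕ) :
    ‖iteratedFDeriv ℝ m (F.jet (k + 1)) x‖ ≤ M * l ^ (k + 1) * majorant ρ (k + 1 + m) := by
  have heq : F.jet (k + 1) =ᶠ[𝓝 x]
      ((k : ℝ) + 2)⁻¹ • normalDeriv k (F.rhs (F.partialSolution k)) := by
    filter_upwards [hF.eventually_analyticAt] with y hFy
    simp [jet_succ hFy, div_eq_inv_mul]
  have hG := analyticAt_normalDeriv (analyticAt_rhs hF hW.analyticAt) k
  rw [(heq.iteratedFDeriv ℝ m).eq_of_nhds, iteratedFDeriv_const_smul_apply hG.contDiffAt,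
    norm_smul, norm_inv, Real.norm_of_nonneg (by positivity), inv_mul_le_iff₀ (by positivity)]
  exact norm_iteratedFDeriv_normalDeriv_rhs_le hdir hρ hC hlM hFC hW m

theorem isMajorized_partialSolution (hdir : ∀ i, ‖F.dir i‖ ≤ 1) (hρ : 4 ≤ ρ) (hC : 0 ≤ C)
    (hlM : MajorantConstants ((n + 1) ^ 2 * C) l M)
    (hF : F.ForallCoeff (AnalyticAt ℝ · (0, x)))
    (hFC : F.ForallCoeff fun f => ∀ K, IsMajorized l ρ x K C 0 f) (k : ℕ) :
    IsMajorized l ρ x (k + 1) M 0 (F.partialSolution k) := by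
  refine ⟨analyticAt_partialSolution hF k, ?_⟩
  induction k with
  | zero =>
    intro j _ m
    have hzero : normalDeriv j (F.partialSolution 0) = fun _ => 0 := by
      ext y
      simp [normalDeriv, partialSolution]
    have := hlM.pos
    have := hlM.one_le
    have := majorant_nonneg (ρ := ρ) (by linarith) (j + m + 0)
    rw [hzero, iteratedFDeriv_fun_zero, Pi.zero_apply, norm_zero]
    positivity
  | succ k ih =>
    intro j hj m
    have heq : normalDeriv j (F.partialSolution (k + 1)) =ᶠ[𝓝 x] F.jet j := by
      filter_upwards [hF.eventually_analyticAt] with y hFy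
        using normalDeriv_partialSolution_of_le hFy (Nat.lt_succ_iff.1 hj)
    rcases (Nat.lt_succ_iff.1 hj).eq_or_lt with rfl | hjk
    · rw [(heq.iteratedFDeriv ℝ m).eq_of_nhds]
      exact norm_iteratedFDeriv_jet_succ_le hdir hρ hC hlM hF (hFC.imp fun _ h => h (k + 1))
        ⟨analyticAt_partialSolution hF k, ih⟩ m
    · have heq' : normalDeriv j (F.partialSolution k) =ᶠ[𝓝 x] F.jet j := by
        filter_upwards [hF.eventually_analyticAt] with y hFy
          using normalDeriv_partialSolution_of_le hFy (Nat.lt_succ_iff.1 hjk)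
      rw [((heq.trans heq'.symm).iteratedFDeriv ℝ m).eq_of_nhds]
      exact ih j hjk m

theorem exists_norm_iteratedFDeriv_jet_le (hdir : ∀ i, ‖F.dir i‖ ≤ 1)
    (hF : F.ForallCoeff (AnalyticAt ℝ · (0, x))) :
    ∃ M L : ℝ, 0 ≤ M ∧ 0 < L ∧ ∀ k m,
      ‖iteratedFDeriv ℝ m (F.jet k) x‖ ≤ M * (k + m)! * L ^ (k + m) := by
  obtain ⟨⟨C, ρ⟩, hFC, hP⟩ := ((hF.imp fun _ => eventually_isMajorized).eventually.and
    (eventually_ge_atTop ((1, 4) : ℝ × ℝ))).exists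
  obtain ⟨hC, hρ⟩ : 1 ≤ C ∧ 4 ≤ ρ := hP
  obtain ⟨l, M, hlM⟩ := exists_majorantConstants (P := (n + 1) ^ 2 * C) (by positivity)
  have hM := hlM.pos
  have hl := hlM.one_le
  have hl₀ : 0 < l := by linarith
  have hρ₀ : 0 < ρ := by linarith
  refine ⟨M, l * ρ, hM.le, mul_pos hl₀ hρ₀, fun k m => ?_⟩
  have hmajorant : majorant ρ (k + m) ≤ (k + m)! * ρ ^ (k + m) :=
    div_le_self (by positivity) (one_le_pow₀ (by linarith [(k + m).cast_nonneg (α := ℝ)]))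
  calc ‖iteratedFDeriv ℝ m (F.jet k) x‖ ≤ M * l ^ k * majorant ρ (k + m) :=
        (isMajorized_partialSolution hdir hρ (by linarith) hlM hF
          (hFC.imp fun f hf K => hf K l hl) k).norm_le k k.lt_succ_self m
    _ ≤ M * l ^ (k + m) * ((k + m)! * ρ ^ (k + m)) :=
        mul_le_mul (by gcongr; exact k.le_add_right m) hmajorant
          (majorant_nonneg hρ₀.le _) (by positivity)
    _ = M * (k + m)! * (l * ρ) ^ (k + m) := by
        rw [mul_pow]
        ring

end Convergence

theorem eventually_analyticAt_jet (hF : F.ForallCoeff (AnalyticAt ℝ · (0, x))) :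
    ∀ᶠ y in 𝓝 x, ∀ k, AnalyticAt ℝ (F.jet k) y := by
  filter_upwards [hF.eventually_analyticAt] with y hFy k
    using analyticAt_normalDeriv (analyticAt_partialSolution hFy k) k

theorem analyticAt_solution (hdir : ∀ i, ‖F.dir i‖ ≤ 1)
    (hF : F.ForallCoeff (AnalyticAt ℝ · (0, x))) : AnalyticAt ℝ F.solution (0, x) := by
  obtain ⟨M, L, hM, hL, hb⟩ := exists_norm_iteratedFDeriv_jet_le hdir hF
  exact analyticAt_normalSeries hM hL (eventually_analyticAt_jet hF) hb

theorem eventually_normalDeriv_solution (hdir : ∀ i, ‖F.dir i‖ ≤ 1)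
    (hF : F.ForallCoeff (AnalyticAt ℝ · (0, x))) :
    ∀ᶠ y in 𝓝 x, ∀ k, normalDeriv k F.solution y = F.jet k y := by
  obtain ⟨M, L, hM, hL, hb⟩ := exists_norm_iteratedFDeriv_jet_le hdir hF
  exact eventually_normalDeriv_normalSeries hM hL (eventually_analyticAt_jet hF) hb

theorem normalJetEq_solution_partialSolution (hdir : ∀ i, ‖F.dir i‖ ≤ 1)
    (hF : F.ForallCoeff (AnalyticAt ℝ · (0, x))) (k : ℕ) :
    NormalJetEq x (k + 1) F.solution (F.partialSolution k) where
  analyticAt_left := analyticAt_solution hdir hF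
  analyticAt_right := analyticAt_partialSolution hF k
  normalDeriv_eq j hj := by
    filter_upwards [hF.eventually_analyticAt, eventually_normalDeriv_solution hdir hF]
      with y hFy hy
    rw [hy j, normalDeriv_partialSolution_of_le hFy (Nat.lt_succ_iff.1 hj)]

theorem normalDeriv_rhs_solution (hdir : ∀ i, ‖F.dir i‖ ≤ 1)
    (hF : F.ForallCoeff (AnalyticAt ℝ · (0, x))) (k : ℕ) :
    normalDeriv k (F.rhs F.solution) x = (k + 2) * F.jet (k + 1) x := by
  have h := normalJetEq_rhs hF (normalJetEq_solution_partialSolution hdir hF k)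
  rw [(h.normalDeriv_eq k k.lt_succ_self).eq_of_nhds, jet_succ hF,
    mul_div_cancel₀ _ (by positivity)]

theorem normalDeriv_fuchsian_operator {W : ℝ × E → ℝ} (hW : AnalyticAt ℝ W (0, x)) (k : ℕ) :
    normalDeriv k (fun z => z.1 * dirDeriv (1, 0) (dirDeriv (1, 0) W) z +
      2 * dirDeriv (1, 0) W z) x = (k + 2) * normalDeriv (k + 1) W x := by
  have hW₁ : AnalyticAt ℝ (dirDeriv (1, 0) W) (0, x) := analyticAt_dirDeriv hW
  rw [normalDeriv_fun_add (analyticAt_fst.fun_mul (analyticAt_dirDeriv hW₁))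
      (analyticAt_const.fun_mul hW₁), normalDeriv_fst_mul (analyticAt_dirDeriv hW₁),
    normalDeriv_fun_const_mul hW₁, normalDeriv_dirDeriv_normal hW₁, normalDeriv_dirDeriv_normal hW,
    normalDeriv_dirDeriv_normal hW]
  rcases k with _ | k
  · simp
  · rw [Nat.add_sub_cancel]
    ring

theorem eventually_solution_eq (hdir : ∀ i, ‖F.dir i‖ ≤ 1)
    (hF : F.ForallCoeff (AnalyticAt ℝ · (0, x))) :
    ∀ᶠ z in 𝓝 (0, x), z.1 * dirDeriv (1, 0) (dirDeriv (1, 0) F.solution) z +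
      2 * dirDeriv (1, 0) F.solution z = F.rhs F.solution z := by
  have hW (y : E) (hFy : F.ForallCoeff (AnalyticAt ℝ · (0, y))) :
      AnalyticAt ℝ (fun z => z.1 * dirDeriv (1, 0) (dirDeriv (1, 0) F.solution) z +
        2 * dirDeriv (1, 0) F.solution z) (0, y) := by
    have hW₁ := analyticAt_dirDeriv (v := (1, 0)) (analyticAt_solution hdir hFy)
    exact (analyticAt_fst.fun_mul (analyticAt_dirDeriv hW₁)).fun_add (analyticAt_const.fun_mul hW₁)
  have hrhs (y : E) (hFy : F.ForallCoeff (AnalyticAt ℝ · (0, y))) :=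
    analyticAt_rhs hFy (analyticAt_solution hdir hFy)
  refine (eventuallyEq_zero_of_normalDeriv_eq_zero ((hW x hF).fun_sub (hrhs x hF)) ?_).mono
    fun z hz => sub_eq_zero.1 hz
  filter_upwards [hF.eventually_analyticAt, eventually_normalDeriv_solution hdir hF]
    with y hFy hjet k
  rw [normalDeriv_fun_sub (hW y hFy) (hrhs y hFy),
    normalDeriv_fuchsian_operator (analyticAt_solution hdir hFy), normalDeriv_rhs_solution hdir hFy,
    hjet, sub_self]

end Solution

end FuchsianEquation

section Flattening

variable {E : Type*} [NormedAddCommGroup E] [NormedSpace ℝ E] {ψ : E → ℝ} {e : E} {p z : ℝ × E}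
  {f : ℝ × E → ℝ}

/-- The coordinates `(s, x) = (t - ψ x, x)`, in which the hypersurface `t = ψ x` is `s = 0`. -/
def flatten {E : Type*} (ψ : E → ℝ) : ℝ × E → ℝ × E := fun p => (p.1 - ψ p.2, p.2)

/-- The inverse of `flatten`. -/
def unflatten {E : Type*} (ψ : E → ℝ) : ℝ × E → ℝ × E := fun z => (z.1 + ψ z.2, z.2)

theorem unflatten_flatten {E : Type*} (ψ : E → ℝ) (p : ℝ × E) :
    unflatten ψ (flatten ψ p) = p := by
  simp [unflatten, flatten]

/-- The derivative in the direction `e` at constant `t`, in the coordinates `(s, x)`. -/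
noncomputable def flatDeriv (ψ : E → ℝ) (e : E) (f : ℝ × E → ℝ) : ℝ × E → ℝ :=
  fun z => dirDeriv (0, e) f z - dirDeriv e ψ z.2 * dirDeriv (1, 0) f z

theorem analyticAt_flatten (hψ : AnalyticAt ℝ ψ p.2) : AnalyticAt ℝ (flatten ψ) p :=
  (analyticAt_fst.fun_sub (hψ.comp_of_eq analyticAt_snd rfl)).prod analyticAt_snd

theorem analyticAt_unflatten (hψ : AnalyticAt ℝ ψ z.2) : AnalyticAt ℝ (unflatten ψ) z :=
  (analyticAt_fst.fun_add (hψ.comp_of_eq analyticAt_snd rfl)).prod analyticAt_snd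

theorem dirDeriv_comp_snd (hψ : AnalyticAt ℝ ψ z.2) (v : ℝ × E) :
    dirDeriv v (ψ ∘ Prod.snd) z = dirDeriv v.2 ψ z.2 := by
  simp only [dirDeriv, (hψ.differentiableAt.hasFDerivAt.comp z hasFDerivAt_snd).fderiv]
  rfl

theorem dirDeriv_comp_flatten (hψ : AnalyticAt ℝ ψ p.2) (hf : AnalyticAt ℝ f (flatten ψ p))
    (v : ℝ × E) :
    dirDeriv v (f ∘ flatten ψ) p = fderiv ℝ f (flatten ψ p) (v.1 - dirDeriv v.2 ψ p.2, v.2) := by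
  have hflat : HasFDerivAt (flatten ψ) ((ContinuousLinearMap.fst ℝ ℝ E -
      (fderiv ℝ ψ p.2).comp (ContinuousLinearMap.snd ℝ ℝ E)).prod
      (ContinuousLinearMap.snd ℝ ℝ E)) p :=
    (hasFDerivAt_fst.sub (hψ.differentiableAt.hasFDerivAt.comp p hasFDerivAt_snd)).prodMk
      hasFDerivAt_snd
  simp only [dirDeriv, (hf.differentiableAt.hasFDerivAt.comp p hflat).fderiv]
  rfl

theorem dirDeriv_time_comp_flatten (hψ : AnalyticAt ℝ ψ p.2)
    (hf : AnalyticAt ℝ f (flatten ψ p)) :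
    dirDeriv (1, 0) (f ∘ flatten ψ) p = (dirDeriv (1, 0) f ∘ flatten ψ) p := by
  rw [dirDeriv_comp_flatten hψ hf]
  simp [dirDeriv]

theorem dirDeriv_space_comp_flatten (hψ : AnalyticAt ℝ ψ p.2)
    (hf : AnalyticAt ℝ f (flatten ψ p)) (e : E) :
    dirDeriv (0, e) (f ∘ flatten ψ) p = (flatDeriv ψ e f ∘ flatten ψ) p := by
  have hsplit : ((0 : ℝ) - dirDeriv e ψ p.2, e) = (0, e) - dirDeriv e ψ p.2 • (1, 0) := by
    ext <;> simp
  rw [dirDeriv_comp_flatten hψ hf, hsplit, map_sub, map_smul]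
  rfl

theorem analyticAt_flatDeriv (hψ : AnalyticAt ℝ ψ z.2) (hf : AnalyticAt ℝ f z) :
    AnalyticAt ℝ (flatDeriv ψ e f) z :=
  (analyticAt_dirDeriv hf).fun_sub
    (((analyticAt_dirDeriv hψ).comp_of_eq analyticAt_snd rfl).fun_mul (analyticAt_dirDeriv hf))

theorem eventually_analyticAt_comp_flatten (hψ : AnalyticAt ℝ ψ p.2)
    (hf : AnalyticAt ℝ f (flatten ψ p)) :
    ∀ᶠ q in 𝓝 p, AnalyticAt ℝ ψ q.2 ∧ AnalyticAt ℝ f (flatten ψ q) :=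
  (continuousAt_snd.eventually hψ.eventually_analyticAt).and
    ((analyticAt_flatten hψ).continuousAt.eventually hf.eventually_analyticAt)

theorem dirDeriv_time_time_comp_flatten (hψ : AnalyticAt ℝ ψ p.2)
    (hf : AnalyticAt ℝ f (flatten ψ p)) :
    dirDeriv (1, 0) (dirDeriv (1, 0) (f ∘ flatten ψ)) p =
      dirDeriv (1, 0) (dirDeriv (1, 0) f) (flatten ψ p) := by
  have heq : dirDeriv (1, 0) (f ∘ flatten ψ) =ᶠ[𝓝 p] dirDeriv (1, 0) f ∘ flatten ψ := by
    filter_upwards [eventually_analyticAt_comp_flatten hψ hf] with q hq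
      using dirDeriv_time_comp_flatten hq.1 hq.2
  exact (dirDeriv_congr heq).eq_of_nhds.trans
    (dirDeriv_time_comp_flatten hψ (analyticAt_dirDeriv hf))

theorem dirDeriv_space_space_comp_flatten (hψ : AnalyticAt ℝ ψ p.2)
    (hf : AnalyticAt ℝ f (flatten ψ p)) (e : E) :
    dirDeriv (0, e) (dirDeriv (0, e) (f ∘ flatten ψ)) p =
      flatDeriv ψ e (flatDeriv ψ e f) (flatten ψ p) := by
  have heq : dirDeriv (0, e) (f ∘ flatten ψ) =ᶠ[𝓝 p] flatDeriv ψ e f ∘ flatten ψ := by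
    filter_upwards [eventually_analyticAt_comp_flatten hψ hf] with q hq
      using dirDeriv_space_comp_flatten hq.1 hq.2 e
  exact (dirDeriv_congr heq).eq_of_nhds.trans
    (dirDeriv_space_comp_flatten hψ (analyticAt_flatDeriv hψ hf) e)

theorem dirDeriv_flatDeriv (hψ : AnalyticAt ℝ ψ z.2) (hf : AnalyticAt ℝ f z) (v : ℝ × E) :
    dirDeriv v (flatDeriv ψ e f) z = dirDeriv v (dirDeriv (0, e) f) z -
      (dirDeriv e ψ z.2 * dirDeriv v (dirDeriv (1, 0) f) z +
        dirDeriv (1, 0) f z * dirDeriv v.2 (dirDeriv e ψ) z.2) := by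
  have hψe : AnalyticAt ℝ (fun z : ℝ × E => dirDeriv e ψ z.2) z :=
    (analyticAt_dirDeriv hψ).comp_of_eq analyticAt_snd rfl
  have hf₀ := (analyticAt_dirDeriv (v := (1, 0)) hf).differentiableAt
  have hfe := (analyticAt_dirDeriv (v := (0, e)) hf).differentiableAt
  rw [← dirDeriv_comp_snd (analyticAt_dirDeriv hψ)]
  change fderiv ℝ (fun z => _ - _ * _) z v = _
  rw [fderiv_fun_sub hfe (hψe.differentiableAt.fun_mul hf₀),
    fderiv_fun_mul hψe.differentiableAt hf₀]
  rfl

theorem flatDeriv_flatDeriv (hψ : AnalyticAt ℝ ψ z.2) (hf : AnalyticAt ℝ f z) :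
    flatDeriv ψ e (flatDeriv ψ e f) z = dirDeriv (0, e) (dirDeriv (0, e) f) z -
      2 * dirDeriv e ψ z.2 * dirDeriv (0, e) (dirDeriv (1, 0) f) z -
      dirDeriv e (dirDeriv e ψ) z.2 * dirDeriv (1, 0) f z +
      dirDeriv e ψ z.2 ^ 2 * dirDeriv (1, 0) (dirDeriv (1, 0) f) z := by
  have hcomm : dirDeriv (1, 0) (dirDeriv (0, e) f) z = dirDeriv (0, e) (dirDeriv (1, 0) f) z :=
    (dirDeriv_comm hf).eq_of_nhds
  have hzero : dirDeriv 0 (dirDeriv e ψ) z.2 = 0 := map_zero _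
  rw [flatDeriv, dirDeriv_flatDeriv hψ hf, dirDeriv_flatDeriv hψ hf, hcomm, hzero]
  ring

end Flattening

section LogarithmicSingularity

theorem analyticAt_log_of_ne_zero {s : ℝ} (hs : s ≠ 0) : AnalyticAt ℝ log s := by
  rcases hs.lt_or_gt with hneg | hpos
  · simpa only [Function.comp_def, id, log_neg_eq_log] using
      (analyticAt_log (neg_pos.2 hneg)).comp analyticAt_id.fun_neg
  · exact analyticAt_log hpos

variable {E : Type*} [NormedAddCommGroup E] [NormedSpace ℝ E] {a : ℝ} {W : ℝ × E → ℝ}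
  {z : ℝ × E}

/-- The ansatz `-a log |s| + W` in the coordinates `(s, x)`; `Real.log s` stands for `log |s|`. -/
noncomputable def logAnsatz {E : Type*} (a : ℝ) (W : ℝ × E → ℝ) : ℝ × E → ℝ :=
  fun z => -a * log z.1 + W z

theorem analyticAt_logAnsatz (hz : z.1 ≠ 0) (hW : AnalyticAt ℝ W z) :
    AnalyticAt ℝ (logAnsatz a W) z :=
  (analyticAt_const.fun_mul ((analyticAt_log_of_ne_zero hz).comp_of_eq analyticAt_fst rfl)).fun_add
    hW

theorem dirDeriv_logAnsatz (hz : z.1 ≠ 0) (hW : AnalyticAt ℝ W z) (v : ℝ × E) :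
    dirDeriv v (logAnsatz a W) z = -a / z.1 * v.1 + dirDeriv v W z := by
  have h : HasFDerivAt (logAnsatz a W) _ z :=
    (((hasFDerivAt_fst (𝕜 := ℝ) (p := z)).log hz).const_mul (-a)).add
      hW.differentiableAt.hasFDerivAt
  simp [dirDeriv, h.fderiv, div_eq_mul_inv, mul_assoc]

theorem dirDeriv_dirDeriv_logAnsatz (hz : z.1 ≠ 0) (hW : AnalyticAt ℝ W z) (v w : ℝ × E) :
    dirDeriv v (dirDeriv w (logAnsatz a W)) z =
      a / z.1 ^ 2 * v.1 * w.1 + dirDeriv v (dirDeriv w W) z := by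
  have heq : dirDeriv w (logAnsatz a W) =ᶠ[𝓝 z] fun y => -a * w.1 * y.1⁻¹ + dirDeriv w W y := by
    filter_upwards [continuousAt_fst.eventually_ne hz, hW.eventually_analyticAt] with y hy hWy
    rw [dirDeriv_logAnsatz hy hWy]
    ring
  have h : HasFDerivAt (fun y => -a * w.1 * y.1⁻¹ + dirDeriv w W y) _ z :=
    ((((hasDerivAt_inv hz).comp_hasFDerivAt z (hasFDerivAt_fst (𝕜 := ℝ) (p := z))).const_mul
      (-a * w.1)).add (analyticAt_dirDeriv hW).differentiableAt.hasFDerivAt)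
  rw [(dirDeriv_congr heq).eq_of_nhds, dirDeriv, h.fderiv]
  simp only [dirDeriv, neg_mul, neg_smul, smul_neg, neg_neg, add_apply, smul_apply,
    ContinuousLinearMap.coe_fst', smul_eq_mul, add_left_inj]
  ring

end LogarithmicSingularity

section WaveReduction

variable {n : ℕ}

/-- The coordinate directions of `ℝⁿ`. -/
noncomputable def coordDir (i : Fin n) : Fin n → ℝ := Pi.single i 1

/-- The principal symbol `1 - |∇ψ|²` of the wave operator at the conormal of `t = ψ x`. -/
noncomputable def conormalSymbol (ψ : (Fin n → ℝ) → ℝ) (x : Fin n → ℝ) : ℝ :=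
  1 - ∑ i, dirDeriv (coordDir i) ψ x ^ 2

/-- The Laplacian of a function on `ℝⁿ`. -/
noncomputable def coordLaplacian (ψ : (Fin n → ℝ) → ℝ) (x : Fin n → ℝ) : ℝ :=
  ∑ i, dirDeriv (coordDir i) (dirDeriv (coordDir i) ψ) x

/-- The covectors `(τ, ξ)` of the coordinate differentials: `ds = (1, -∇ψ)` and the `dxᵢ`. -/
noncomputable def coframe (ψ : (Fin n → ℝ) → ℝ) (x : Fin n → ℝ) :
    Fin (n + 1) → ℝ × (Fin n → ℝ) :=
  Fin.cons (1, fun i => -dirDeriv (coordDir i) ψ x) fun i => (0, coordDir i)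

variable {ψ : (Fin n → ℝ) → ℝ} {x : Fin n → ℝ}

theorem analyticAt_conormalSymbol (hψ : AnalyticAt ℝ ψ x) :
    AnalyticAt ℝ (conormalSymbol ψ) x :=
  analyticAt_const.fun_sub
    (Finset.analyticAt_fun_sum _ fun _ _ => (analyticAt_dirDeriv hψ).fun_pow 2)

theorem analyticAt_coordLaplacian (hψ : AnalyticAt ℝ ψ x) :
    AnalyticAt ℝ (coordLaplacian ψ) x :=
  Finset.analyticAt_fun_sum _ fun _ _ => analyticAt_dirDeriv (analyticAt_dirDeriv hψ)

theorem analyticAt_coframe (hψ : AnalyticAt ℝ ψ x) (μ : Fin (n + 1)) :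
    AnalyticAt ℝ (fun x => coframe ψ x μ) x := by
  refine Fin.cases ?_ (fun i => ?_) μ
  · exact analyticAt_const.prod (.pi fun i => (analyticAt_dirDeriv hψ).fun_neg)
  · exact analyticAt_const

theorem wave_comp_flatten {f : ℝ × (Fin n → ℝ) → ℝ} {p : ℝ × (Fin n → ℝ)}
    (hψ : AnalyticAt ℝ ψ p.2) (hf : AnalyticAt ℝ f (flatten ψ p)) :
    dirDeriv (1, 0) (dirDeriv (1, 0) (f ∘ flatten ψ)) p -
        ∑ i, dirDeriv (0, coordDir i) (dirDeriv (0, coordDir i) (f ∘ flatten ψ)) p =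
      conormalSymbol ψ p.2 * dirDeriv (1, 0) (dirDeriv (1, 0) f) (flatten ψ p) -
        ∑ i, dirDeriv (0, coordDir i) (dirDeriv (0, coordDir i) f) (flatten ψ p) +
        ∑ i, 2 * dirDeriv (coordDir i) ψ p.2 *
          dirDeriv (0, coordDir i) (dirDeriv (1, 0) f) (flatten ψ p) +
        coordLaplacian ψ p.2 * dirDeriv (1, 0) f (flatten ψ p) := by
  have hspace (i : Fin n) := (dirDeriv_space_space_comp_flatten hψ hf (coordDir i)).trans
    (flatDeriv_flatDeriv (z := flatten ψ p) hψ hf)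
  rw [dirDeriv_time_time_comp_flatten hψ hf, Finset.sum_congr rfl fun i _ => hspace i]
  simp only [conormalSymbol, coordLaplacian, Finset.sum_add_distrib, Finset.sum_sub_distrib,
    ← Finset.sum_mul, flatten]
  ring

variable (ψ) in
/-- The components `(τ, ξ)` in the coordinates `(t, x)` of the differential of `f`. -/
noncomputable def covector (f : ℝ × (Fin n → ℝ) → ℝ) (z : ℝ × (Fin n → ℝ)) : ℝ × (Fin n → ℝ) :=
  (dirDeriv (1, 0) f z, fun i => flatDeriv ψ (coordDir i) f z)

variable (ψ) in
/-- The function `h` in `a B(ds, ds) = 1 - |∇ψ|² + s h`. -/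
noncomputable def conormalQuotient (a : ℝ)
    (B : ℝ × (Fin n → ℝ) → ℝ × (Fin n → ℝ) →L[ℝ] ℝ × (Fin n → ℝ) →L[ℝ] ℝ) :
    ℝ × (Fin n → ℝ) → ℝ :=
  normalQuotient fun z =>
    a * B z (coframe ψ z.2 0) (coframe ψ z.2 0) - conormalSymbol ψ z.2

variable (ψ) in
/-- The equation satisfied by the regular part `W` of a solution `-a log |s| + W` of
`u_tt - Δu = B(du, du) + ℓ(du) + c`, where `B`, `ℓ`, `c` depend on `(s, x)`. -/
noncomputable def waveRemainderEquation (a : ℝ)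
    (B : ℝ × (Fin n → ℝ) → ℝ × (Fin n → ℝ) →L[ℝ] ℝ × (Fin n → ℝ) →L[ℝ] ℝ)
    (ℓ : ℝ × (Fin n → ℝ) → ℝ × (Fin n → ℝ) →L[ℝ] ℝ) (c : ℝ × (Fin n → ℝ) → ℝ) :
    FuchsianEquation (Fin n → ℝ) n where
  dir := coordDir
  second i := Fin.cons (fun z => -2 * dirDeriv (coordDir i) ψ z.2 / conormalSymbol ψ z.2)
    fun j z => if i = j then 1 / conormalSymbol ψ z.2 else 0
  quadratic μ ν z := B z (coframe ψ z.2 μ) (coframe ψ z.2 ν) / conormalSymbol ψ z.2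
  linear μ z := (ℓ z (coframe ψ z.2 μ) -
    if μ = 0 then coordLaplacian ψ z.2 + 2 * conormalQuotient ψ a B z else 0) /
      conormalSymbol ψ z.2
  tangential i z := -a * (B z (coframe ψ z.2 0) (coframe ψ z.2 i.succ) +
    B z (coframe ψ z.2 i.succ) (coframe ψ z.2 0)) / conormalSymbol ψ z.2
  source z := (z.1 * c z + a * (coordLaplacian ψ z.2 + conormalQuotient ψ a B z -
    ℓ z (coframe ψ z.2 0))) / conormalSymbol ψ z.2

variable {a : ℝ} {B : ℝ × (Fin n → ℝ) → ℝ × (Fin n → ℝ) →L[ℝ] ℝ × (Fin n → ℝ) →L[ℝ] ℝ}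
  {ℓ : ℝ × (Fin n → ℝ) → ℝ × (Fin n → ℝ) →L[ℝ] ℝ} {c : ℝ × (Fin n → ℝ) → ℝ}
  {W : ℝ × (Fin n → ℝ) → ℝ} {z : ℝ × (Fin n → ℝ)}

theorem covector_eq_smul_add_sum (f : ℝ × (Fin n → ℝ) → ℝ) (z : ℝ × (Fin n → ℝ)) :
    covector ψ f z = dirDeriv (1, 0) f z • coframe ψ z.2 0 +
      ∑ i, dirDeriv (0, coordDir i) f z • coframe ψ z.2 i.succ := by
  ext i
  · simp [covector, coframe, Prod.fst_sum]
  · simp only [covector, flatDeriv, coordDir, coframe, Fin.cons_zero, Fin.cons_succ, Prod.smul_mk,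
      Prod.snd_add, Prod.snd_sum, Pi.add_apply, Pi.smul_apply, Finset.sum_apply, Pi.single_apply,
      smul_eq_mul, mul_one, mul_zero, mul_neg, mul_ite, Finset.sum_ite_eq, Finset.mem_univ, if_true]
    ring

theorem covector_logAnsatz (hz : z.1 ≠ 0) (hW : AnalyticAt ℝ W z) :
    covector ψ (logAnsatz a W) z = (-a / z.1) • coframe ψ z.2 0 + covector ψ W z := by
  ext i
  · simp [covector, coframe, dirDeriv_logAnsatz hz hW]
  · simp only [covector, flatDeriv, coframe, dirDeriv_logAnsatz hz hW, Fin.cons_zero, Prod.smul_mk,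
      Prod.mk_add_mk, Pi.add_apply, Pi.smul_apply, smul_eq_mul, mul_one, mul_zero, zero_add,
      mul_neg]
    ring

theorem covector_eq_sum_frame (F : FuchsianEquation (Fin n → ℝ) n) (hF : F.dir = coordDir)
    (f : ℝ × (Fin n → ℝ) → ℝ) (z : ℝ × (Fin n → ℝ)) :
    covector ψ f z = ∑ μ, dirDeriv (F.frame μ) f z • coframe ψ z.2 μ := by
  rw [covector_eq_smul_add_sum, Fin.sum_univ_succ, FuchsianEquation.frame, hF]
  rfl

theorem conormalSymbol_mul_sum_second (hd : conormalSymbol ψ z.2 ≠ 0) :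
    conormalSymbol ψ z.2 * ∑ i, ∑ μ, (waveRemainderEquation ψ a B ℓ c).second i μ z *
      dirDeriv (0, coordDir i) (dirDeriv ((waveRemainderEquation ψ a B ℓ c).frame μ) W) z =
    ∑ i, dirDeriv (0, coordDir i) (dirDeriv (0, coordDir i) W) z -
      ∑ i, 2 * dirDeriv (coordDir i) ψ z.2 * dirDeriv (0, coordDir i) (dirDeriv (1, 0) W) z := by
  rw [Finset.mul_sum, ← Finset.sum_sub_distrib]
  refine Finset.sum_congr rfl fun i _ => ?_
  simp only [waveRemainderEquation, FuchsianEquation.frame, Fin.sum_univ_succ, Fin.cons_zero,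
    Fin.cons_succ, ite_mul, zero_mul, Finset.sum_ite_eq, Finset.mem_univ, if_true]
  field_simp
  ring

theorem conormalSymbol_mul_sum_quadratic (hd : conormalSymbol ψ z.2 ≠ 0) :
    conormalSymbol ψ z.2 * ∑ μ, ∑ ν, (waveRemainderEquation ψ a B ℓ c).quadratic μ ν z *
      (dirDeriv ((waveRemainderEquation ψ a B ℓ c).frame μ) W z *
        dirDeriv ((waveRemainderEquation ψ a B ℓ c).frame ν) W z) =
    B z (covector ψ W z) (covector ψ W z) := by
  simp only [covector_eq_sum_frame (waveRemainderEquation ψ a B ℓ c) rfl, map_sum, map_smul,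
    sum_apply, smul_apply, smul_eq_mul, Finset.mul_sum]
  rw [Finset.sum_comm]
  refine Finset.sum_congr rfl fun μ _ => Finset.sum_congr rfl fun ν _ => ?_
  simp only [waveRemainderEquation]
  field_simp

theorem conormalSymbol_mul_sum_linear (hd : conormalSymbol ψ z.2 ≠ 0) :
    conormalSymbol ψ z.2 * ∑ μ, (waveRemainderEquation ψ a B ℓ c).linear μ z *
      dirDeriv ((waveRemainderEquation ψ a B ℓ c).frame μ) W z =
    ℓ z (covector ψ W z) -
      (coordLaplacian ψ z.2 + 2 * conormalQuotient ψ a B z) * dirDeriv (1, 0) W z := by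
  set F := waveRemainderEquation ψ a B ℓ c with hF
  have hterm (μ : Fin (n + 1)) :
      conormalSymbol ψ z.2 * (F.linear μ z * dirDeriv (F.frame μ) W z) =
        dirDeriv (F.frame μ) W z * ℓ z (coframe ψ z.2 μ) - if μ = 0 then (coordLaplacian ψ z.2 +
          2 * conormalQuotient ψ a B z) * dirDeriv (F.frame μ) W z else 0 := by
    rw [← ite_zero_mul]
    simp only [hF, waveRemainderEquation]
    field_simp
  simp only [covector_eq_sum_frame F rfl, map_sum, map_smul, smul_eq_mul, Finset.mul_sum, hterm,
    Finset.sum_sub_distrib, Finset.sum_ite_eq', Finset.mem_univ, if_true]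
  rfl

theorem conormalSymbol_mul_secondOrderPart (hd : conormalSymbol ψ z.2 ≠ 0) :
    conormalSymbol ψ z.2 * (waveRemainderEquation ψ a B ℓ c).secondOrderPart W z =
      ∑ i, dirDeriv (0, coordDir i) (dirDeriv (0, coordDir i) W) z -
      ∑ i, 2 * dirDeriv (coordDir i) ψ z.2 * dirDeriv (0, coordDir i) (dirDeriv (1, 0) W) z +
      B z (covector ψ W z) (covector ψ W z) + ℓ z (covector ψ W z) -
      (coordLaplacian ψ z.2 + 2 * conormalQuotient ψ a B z) * dirDeriv (1, 0) W z := by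
  rw [FuchsianEquation.secondOrderPart, mul_add, mul_add, conormalSymbol_mul_sum_quadratic hd,
    conormalSymbol_mul_sum_linear hd]
  refine (congrArg (· + _ + _) (conormalSymbol_mul_sum_second hd)).trans ?_
  ring

theorem conormalSymbol_mul_firstOrderPart (hd : conormalSymbol ψ z.2 ≠ 0) :
    conormalSymbol ψ z.2 * (waveRemainderEquation ψ a B ℓ c).firstOrderPart W z =
      -a * (B z (coframe ψ z.2 0) (covector ψ W z) + B z (covector ψ W z) (coframe ψ z.2 0)) +
      2 * dirDeriv (1, 0) W z * (a * B z (coframe ψ z.2 0) (coframe ψ z.2 0)) + z.1 * c z +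
      a * (coordLaplacian ψ z.2 + conormalQuotient ψ a B z - ℓ z (coframe ψ z.2 0)) := by
  have tangential_term : conormalSymbol ψ z.2 * ∑ i,
      (waveRemainderEquation ψ a B ℓ c).tangential i z * dirDeriv (0, coordDir i) W z =
      -a * ∑ i, (dirDeriv (0, coordDir i) W z * B z (coframe ψ z.2 0) (coframe ψ z.2 i.succ) +
        dirDeriv (0, coordDir i) W z * B z (coframe ψ z.2 i.succ) (coframe ψ z.2 0)) := by
    rw [Finset.mul_sum, Finset.mul_sum]
    refine Finset.sum_congr rfl fun i _ => ?_
    simp only [waveRemainderEquation]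
    field_simp
  have source_term : conormalSymbol ψ z.2 * (waveRemainderEquation ψ a B ℓ c).source z =
      z.1 * c z +
      a * (coordLaplacian ψ z.2 + conormalQuotient ψ a B z - ℓ z (coframe ψ z.2 0)) :=
    mul_div_cancel₀ _ hd
  rw [FuchsianEquation.firstOrderPart, mul_add, source_term]
  refine (congrArg (· + _) tangential_term).trans ?_
  simp only [covector_eq_smul_add_sum, map_add, map_smul, map_sum, add_apply, smul_apply,
    sum_apply, smul_eq_mul, Finset.sum_add_distrib]
  ring

/-- Multiplied by `s`, the two sides differ by the Fuchsian equation and by the coefficient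
`a B(ds, ds) - (1 - |∇ψ|²) - s h` of `a / s`. -/
theorem wave_logAnsatz (hz : z.1 ≠ 0) (hd : conormalSymbol ψ z.2 ≠ 0) (hW : AnalyticAt ℝ W z)
    (hB : z.1 * conormalQuotient ψ a B z =
      a * B z (coframe ψ z.2 0) (coframe ψ z.2 0) - conormalSymbol ψ z.2)
    (hWz : z.1 * dirDeriv (1, 0) (dirDeriv (1, 0) W) z + 2 * dirDeriv (1, 0) W z =
      (waveRemainderEquation ψ a B ℓ c).rhs W z) :
    conormalSymbol ψ z.2 * dirDeriv (1, 0) (dirDeriv (1, 0) (logAnsatz a W)) z -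
        ∑ i, dirDeriv (0, coordDir i) (dirDeriv (0, coordDir i) (logAnsatz a W)) z +
        ∑ i, 2 * dirDeriv (coordDir i) ψ z.2 *
          dirDeriv (0, coordDir i) (dirDeriv (1, 0) (logAnsatz a W)) z +
        coordLaplacian ψ z.2 * dirDeriv (1, 0) (logAnsatz a W) z =
      B z (covector ψ (logAnsatz a W) z) (covector ψ (logAnsatz a W) z) +
        ℓ z (covector ψ (logAnsatz a W) z) + c z := by
  have hH := conormalSymbol_mul_secondOrderPart (a := a) (B := B) (ℓ := ℓ) (c := c) (W := W) hd
  have hQ := conormalSymbol_mul_firstOrderPart (a := a) (B := B) (ℓ := ℓ) (c := c) (W := W) hd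
  rw [FuchsianEquation.rhs] at hWz
  simp only [covector_logAnsatz hz hW, dirDeriv_dirDeriv_logAnsatz hz hW, dirDeriv_logAnsatz hz hW,
    map_add, map_smul, add_apply, smul_apply, smul_eq_mul, mul_zero, mul_one, zero_add]
  refine mul_left_cancel₀ hz ?_
  field_simp
  linear_combination z.1 * conormalSymbol ψ z.2 * hWz + z.1 ^ 2 * hH + z.1 * hQ +
    (a - 2 * z.1 * dirDeriv (1, 0) W z) * hB

end WaveReduction

section CoefficientRegularity

variable {n : ℕ} {ψ : (Fin n → ℝ) → ℝ} {x : Fin n → ℝ} {a : ℝ}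
  {B : ℝ × (Fin n → ℝ) → ℝ × (Fin n → ℝ) →L[ℝ] ℝ × (Fin n → ℝ) →L[ℝ] ℝ}
  {ℓ : ℝ × (Fin n → ℝ) → ℝ × (Fin n → ℝ) →L[ℝ] ℝ} {c : ℝ × (Fin n → ℝ) → ℝ}

theorem norm_coordDir (i : Fin n) : ‖coordDir i‖ = 1 := by
  rw [coordDir, Pi.norm_single, norm_one]

theorem analyticAt_clm_apply {E F G : Type*} [NormedAddCommGroup E] [NormedSpace ℝ E]
    [NormedAddCommGroup F] [NormedSpace ℝ F] [NormedAddCommGroup G] [NormedSpace ℝ G]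
    {A : E → F →L[ℝ] G} {v : E → F} {z : E} (hA : AnalyticAt ℝ A z) (hv : AnalyticAt ℝ v z) :
    AnalyticAt ℝ (fun z => A z (v z)) z :=
  ((ContinuousLinearMap.id ℝ (F →L[ℝ] G)).analyticAt_bilinear (A z, v z)).comp₂ hA hv

theorem analyticAt_conormalDefect (hψ : AnalyticAt ℝ ψ x) (hB : AnalyticAt ℝ B (0, x)) :
    AnalyticAt ℝ (fun z => a * B z (coframe ψ z.2 0) (coframe ψ z.2 0) - conormalSymbol ψ z.2)
      (0, x) := by
  have hN : AnalyticAt ℝ (fun z : ℝ × (Fin n → ℝ) => coframe ψ z.2 0) (0, x) :=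
    (analyticAt_coframe hψ 0).comp_of_eq analyticAt_snd rfl
  exact (analyticAt_const.fun_mul
    (analyticAt_clm_apply (analyticAt_clm_apply hB hN) hN)).fun_sub
      ((analyticAt_conormalSymbol hψ).comp_of_eq analyticAt_snd rfl)

theorem forallCoeff_analyticAt_waveRemainderEquation (hψ : AnalyticAt ℝ ψ x)
    (hd : conormalSymbol ψ x ≠ 0) (hB : AnalyticAt ℝ B (0, x)) (hℓ : AnalyticAt ℝ ℓ (0, x))
    (hc : AnalyticAt ℝ c (0, x)) :
    (waveRemainderEquation ψ a B ℓ c).ForallCoeff (AnalyticAt ℝ · (0, x)) := by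
  have hsymb : AnalyticAt ℝ (fun z : ℝ × (Fin n → ℝ) => conormalSymbol ψ z.2) (0, x) :=
    (analyticAt_conormalSymbol hψ).comp_of_eq analyticAt_snd rfl
  have hlap : AnalyticAt ℝ (fun z : ℝ × (Fin n → ℝ) => coordLaplacian ψ z.2) (0, x) :=
    (analyticAt_coordLaplacian hψ).comp_of_eq analyticAt_snd rfl
  have hgrad (i : Fin n) :
      AnalyticAt ℝ (fun z : ℝ × (Fin n → ℝ) => dirDeriv (coordDir i) ψ z.2) (0, x) :=
    (analyticAt_dirDeriv hψ).comp_of_eq analyticAt_snd rfl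
  have hcoframe (μ : Fin (n + 1)) :
      AnalyticAt ℝ (fun z : ℝ × (Fin n → ℝ) => coframe ψ z.2 μ) (0, x) :=
    (analyticAt_coframe hψ μ).comp_of_eq analyticAt_snd rfl
  have hBcoframe (μ ν : Fin (n + 1)) :
      AnalyticAt ℝ (fun z => B z (coframe ψ z.2 μ) (coframe ψ z.2 ν)) (0, x) :=
    analyticAt_clm_apply (analyticAt_clm_apply hB (hcoframe μ)) (hcoframe ν)
  have hℓcoframe (μ : Fin (n + 1)) : AnalyticAt ℝ (fun z => ℓ z (coframe ψ z.2 μ)) (0, x) :=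
    analyticAt_clm_apply hℓ (hcoframe μ)
  have hquot : AnalyticAt ℝ (conormalQuotient ψ a B) (0, x) :=
    analyticAt_normalQuotient (analyticAt_conormalDefect hψ hB)
  refine ⟨fun i μ => ?_, fun μ ν => (hBcoframe μ ν).fun_div hsymb hd, fun μ => ?_, fun i => ?_, ?_⟩
  · refine Fin.cases ?_ (fun j => ?_) μ
    · exact (analyticAt_const.fun_mul (hgrad i)).fun_div hsymb hd
    · by_cases hij : i = j
      · simpa [waveRemainderEquation, hij] using hsymb.fun_inv hd
      · simpa [waveRemainderEquation, hij] using analyticAt_const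
  · refine AnalyticAt.fun_div ((hℓcoframe μ).fun_sub ?_) hsymb hd
    split_ifs
    · exact hlap.fun_add (analyticAt_const.fun_mul hquot)
    · exact analyticAt_const
  · exact (analyticAt_const.fun_mul ((hBcoframe 0 i.succ).fun_add (hBcoframe i.succ 0))).fun_div
      hsymb hd
  · exact ((analyticAt_fst.fun_mul hc).fun_add (analyticAt_const.fun_mul
      ((hlap.fun_add hquot).fun_sub (hℓcoframe 0)))).fun_div hsymb hd

end CoefficientRegularity

section PartialDerivatives

variable {n : ℕ} {u : ℝ → (Fin n → ℝ) → ℝ} {t : ℝ} {x : Fin n → ℝ}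

theorem ptd_eq_dirDeriv (hu : AnalyticAt ℝ (Function.uncurry u) (t, x)) :
    ptd u t x = dirDeriv (1, 0) (Function.uncurry u) (t, x) :=
  (hu.differentiableAt.hasFDerivAt.comp_hasDerivAt_of_eq t
    ((hasDerivAt_id t).prodMk (hasDerivAt_const t x)) rfl).deriv

theorem pxd_eq_dirDeriv (hu : AnalyticAt ℝ (Function.uncurry u) (t, x)) (i : Fin n) :
    pxd i u t x = dirDeriv (0, coordDir i) (Function.uncurry u) (t, x) :=
  (hu.differentiableAt.hasFDerivAt.comp_hasDerivAt_of_eq (x i)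
    ((hasDerivAt_const _ t).prodMk (hasDerivAt_update x i (x i)))
      (by rw [Function.update_eq_self])).deriv

theorem gradp_eq_dirDeriv {ψ : (Fin n → ℝ) → ℝ} (hψ : AnalyticAt ℝ ψ x) (i : Fin n) :
    gradp ψ x i = dirDeriv (coordDir i) ψ x :=
  (hψ.differentiableAt.hasFDerivAt.comp_hasDerivAt_of_eq (x i) (hasDerivAt_update x i (x i))
    (by rw [Function.update_eq_self])).deriv

theorem ptd_ptd_eq_dirDeriv (hu : AnalyticAt ℝ (Function.uncurry u) (t, x)) :
    ptd (ptd u) t x = dirDeriv (1, 0) (dirDeriv (1, 0) (Function.uncurry u)) (t, x) := by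
  have heq : Function.uncurry (ptd u) =ᶠ[𝓝 (t, x)] dirDeriv (1, 0) (Function.uncurry u) := by
    filter_upwards [hu.eventually_analyticAt] with q hq using ptd_eq_dirDeriv hq
  rw [ptd_eq_dirDeriv ((analyticAt_dirDeriv hu).congr heq.symm), (dirDeriv_congr heq).eq_of_nhds]

theorem pxd_pxd_eq_dirDeriv (hu : AnalyticAt ℝ (Function.uncurry u) (t, x)) (i : Fin n) :
    pxd i (pxd i u) t x =
      dirDeriv (0, coordDir i) (dirDeriv (0, coordDir i) (Function.uncurry u)) (t, x) := by
  have heq : Function.uncurry (pxd i u) =ᶠ[𝓝 (t, x)]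
      dirDeriv (0, coordDir i) (Function.uncurry u) := by
    filter_upwards [hu.eventually_analyticAt] with q hq using pxd_eq_dirDeriv hq i
  rw [pxd_eq_dirDeriv ((analyticAt_dirDeriv hu).congr heq.symm), (dirDeriv_congr heq).eq_of_nhds]

end PartialDerivatives

section HomogeneousPolynomials

variable {n : ℕ} {U : Set (ℝ × (Fin n → ℝ))} {g : ℝ → (Fin n → ℝ) → ℝ → (Fin n → ℝ) → ℝ}

/-- The coordinate functionals of `ℝ × ℝⁿ`, in the numbering used by `HomogPoly`. -/
def coordFunctional : Fin (n + 1) → ℝ × (Fin n → ℝ) →L[ℝ] ℝ :=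
  Fin.cons (.fst ℝ ℝ (Fin n → ℝ)) fun i => (ContinuousLinearMap.proj i).comp (.snd ℝ ℝ (Fin n → ℝ))

theorem coordFunctional_apply (μ : Fin (n + 1)) (τ : ℝ) (ξ : Fin n → ℝ) :
    coordFunctional μ (τ, ξ) = (Fin.cons τ ξ : Fin (n + 1) → ℝ) μ :=
  Fin.cases rfl (fun _ => rfl) μ

theorem analyticAt_sum_smul_const {ι E F : Type*} [Fintype ι] [NormedAddCommGroup E]
    [NormedSpace ℝ E] [NormedAddCommGroup F] [NormedSpace ℝ F] {c : ι → E → ℝ} {p : E}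
    (hc : ∀ i, AnalyticAt ℝ (c i) p) (A : ι → F) :
    AnalyticAt ℝ (fun p => ∑ i, c i p • A i) p :=
  Finset.analyticAt_fun_sum _ fun i _ => (hc i).fun_smul analyticAt_const

theorem HomogPoly.exists_quadraticForm (hg : HomogPoly 2 U g) :
    ∃ B : ℝ × (Fin n → ℝ) → ℝ × (Fin n → ℝ) →L[ℝ] ℝ × (Fin n → ℝ) →L[ℝ] ℝ,
      AnalyticOnNhd ℝ B U ∧ ∀ t x τ ξ, g t x τ ξ = B (t, x) (τ, ξ) (τ, ξ) := by
  obtain ⟨c, hc, hg⟩ := hg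
  refine ⟨fun p => ∑ μ, c μ p.1 p.2 •
    (coordFunctional (μ 0)).smulRight (coordFunctional (μ 1)), fun p hp =>
      analyticAt_sum_smul_const (fun μ => hc μ p hp) _, ?_⟩
  simp [hg, Fin.prod_univ_two, coordFunctional_apply]

theorem HomogPoly.exists_linearForm (hg : HomogPoly 1 U g) :
    ∃ ℓ : ℝ × (Fin n → ℝ) → ℝ × (Fin n → ℝ) →L[ℝ] ℝ,
      AnalyticOnNhd ℝ ℓ U ∧ ∀ t x τ ξ, g t x τ ξ = ℓ (t, x) (τ, ξ) := by
  obtain ⟨c, hc, hg⟩ := hg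
  refine ⟨fun p => ∑ μ, c μ p.1 p.2 • coordFunctional (μ 0), fun p hp =>
    analyticAt_sum_smul_const (fun μ => hc μ p hp) _, ?_⟩
  simp [hg, coordFunctional_apply]

theorem HomogPoly.exists_const (hg : HomogPoly 0 U g) :
    ∃ c : ℝ × (Fin n → ℝ) → ℝ,
      AnalyticOnNhd ℝ c U ∧ ∀ t x τ ξ, g t x τ ξ = c (t, x) := by
  obtain ⟨c, hc, hg⟩ := hg
  exact ⟨fun p => ∑ μ, c μ p.1 p.2, fun p hp => Finset.analyticAt_fun_sum _ fun μ _ => hc μ p hp,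
    by simp [hg]⟩

end HomogeneousPolynomials

section SingularSolution

variable {n : ℕ} {ψ : (Fin n → ℝ) → ℝ} {x : Fin n → ℝ} {a : ℝ} {W : ℝ × (Fin n → ℝ) → ℝ}
  {B : ℝ × (Fin n → ℝ) → ℝ × (Fin n → ℝ) →L[ℝ] ℝ × (Fin n → ℝ) →L[ℝ] ℝ}
  {ℓ : ℝ × (Fin n → ℝ) → ℝ × (Fin n → ℝ) →L[ℝ] ℝ} {c : ℝ × (Fin n → ℝ) → ℝ}
  {p : ℝ × (Fin n → ℝ)}

/-- The function `-a log |t - ψ x| + W(t - ψ x, x)`. -/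
noncomputable def singularWave (a : ℝ) (ψ : (Fin n → ℝ) → ℝ) (W : ℝ × (Fin n → ℝ) → ℝ) :
    ℝ → (Fin n → ℝ) → ℝ :=
  fun t x => -a * log |t - ψ x| + W (flatten ψ (t, x))

theorem uncurry_singularWave :
    Function.uncurry (singularWave a ψ W) = logAnsatz a W ∘ flatten ψ := by
  ext p
  simp only [Function.uncurry, singularWave, log_abs]
  rfl

theorem analyticAt_uncurry_singularWave (hp : p.1 ≠ ψ p.2) (hψ : AnalyticAt ℝ ψ p.2)
    (hW : AnalyticAt ℝ W (flatten ψ p)) :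
    AnalyticAt ℝ (Function.uncurry (singularWave a ψ W)) p := by
  rw [uncurry_singularWave]
  exact (analyticAt_logAnsatz (sub_ne_zero.2 hp) hW).comp (analyticAt_flatten hψ)

/-- The covector `(∂_t u, ∇u)` at the point `p`. -/
noncomputable def differential (u : ℝ → (Fin n → ℝ) → ℝ) (p : ℝ × (Fin n → ℝ)) :
    ℝ × (Fin n → ℝ) :=
  (ptd u p.1 p.2, gradx u p.1 p.2)

variable (B ℓ c) in
/-- The equation `u_tt - Δu = B(du, du) + ℓ(du) + c` at the point `p`, a pointwise form of
`SolvesWave`. -/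
def SolvesWaveAt (u : ℝ → (Fin n → ℝ) → ℝ) (p : ℝ × (Fin n → ℝ)) : Prop :=
  ptd (ptd u) p.1 p.2 - lapx u p.1 p.2 =
    B p (differential u p) (differential u p) + ℓ p (differential u p) + c p

theorem differential_singularWave (hp : p.1 ≠ ψ p.2) (hψ : AnalyticAt ℝ ψ p.2)
    (hW : AnalyticAt ℝ W (flatten ψ p)) :
    differential (singularWave a ψ W) p = covector ψ (logAnsatz a W) (flatten ψ p) := by
  have hu := analyticAt_uncurry_singularWave (a := a) hp hψ hW
  have hL := analyticAt_logAnsatz (a := a) (sub_ne_zero.2 hp) hW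
  refine Prod.ext ((ptd_eq_dirDeriv hu).trans ?_)
    (funext fun i => (pxd_eq_dirDeriv hu i).trans ?_) <;> rw [uncurry_singularWave]
  · exact dirDeriv_time_comp_flatten hψ hL
  · exact dirDeriv_space_comp_flatten hψ hL _

variable (ψ a B ℓ c) in
/-- The equation `waveRemainderEquation` for `B`, `ℓ`, `c` given as functions of `(t, x)`. -/
noncomputable def remainderEquation : FuchsianEquation (Fin n → ℝ) n :=
  waveRemainderEquation ψ a (B ∘ unflatten ψ) (ℓ ∘ unflatten ψ) (c ∘ unflatten ψ)

theorem solvesWaveAt_singularWave (hp : p.1 ≠ ψ p.2) (hψ : AnalyticAt ℝ ψ p.2)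
    (hd : conormalSymbol ψ p.2 ≠ 0) (hW : AnalyticAt ℝ W (flatten ψ p))
    (hB : (flatten ψ p).1 * conormalQuotient ψ a (B ∘ unflatten ψ) (flatten ψ p) =
      a * (B ∘ unflatten ψ) (flatten ψ p) (coframe ψ p.2 0) (coframe ψ p.2 0) -
        conormalSymbol ψ p.2)
    (hWp : (flatten ψ p).1 * dirDeriv (1, 0) (dirDeriv (1, 0) W) (flatten ψ p) +
      2 * dirDeriv (1, 0) W (flatten ψ p) =
        (remainderEquation ψ a B ℓ c).rhs W (flatten ψ p)) :
    SolvesWaveAt B ℓ c (singularWave a ψ W) p := by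
  have hz : (flatten ψ p).1 ≠ 0 := sub_ne_zero.2 hp
  have hu := analyticAt_uncurry_singularWave (a := a) hp hψ hW
  have hwave := wave_comp_flatten hψ (analyticAt_logAnsatz (a := a) hz hW)
  rw [← uncurry_singularWave] at hwave
  have hlog := wave_logAnsatz hz hd hW hB hWp
  simp only [Function.comp_apply, unflatten_flatten] at hlog
  rw [SolvesWaveAt, differential_singularWave hp hψ hW, ← hlog, ptd_ptd_eq_dirDeriv hu, lapx,
    Finset.sum_congr rfl fun i _ => pxd_pxd_eq_dirDeriv hu i]
  exact hwave

theorem analyticAt_comp_unflatten {F : Type*} [NormedAddCommGroup F] [NormedSpace ℝ F]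
    {g : ℝ × (Fin n → ℝ) → F} (hψ : AnalyticAt ℝ ψ x) (hg : AnalyticAt ℝ g (ψ x, x)) :
    AnalyticAt ℝ (g ∘ unflatten ψ) (0, x) :=
  hg.comp_of_eq (analyticAt_unflatten hψ) (Prod.ext (zero_add _) rfl)

theorem eventually_fst_mul_conormalQuotient (hψ : AnalyticAt ℝ ψ x)
    (hB : AnalyticAt ℝ B (0, x)) (hchar : ∀ᶠ y in 𝓝 x,
      conormalSymbol ψ y = a * B (0, y) (coframe ψ y 0) (coframe ψ y 0)) :
    ∀ᶠ z in 𝓝 (0, x), z.1 * conormalQuotient ψ a B z =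
      a * B z (coframe ψ z.2 0) (coframe ψ z.2 0) - conormalSymbol ψ z.2 :=
  eventually_fst_mul_normalQuotient (analyticAt_conormalDefect hψ hB)
    (hchar.mono fun _ hy => sub_eq_zero.2 hy.symm)

theorem eventually_solvesWaveAt_singularWave (hψ : AnalyticAt ℝ ψ x)
    (hd : conormalSymbol ψ x ≠ 0) (hB : AnalyticAt ℝ B (ψ x, x)) (hℓ : AnalyticAt ℝ ℓ (ψ x, x))
    (hc : AnalyticAt ℝ c (ψ x, x)) (hchar : ∀ᶠ y in 𝓝 x,
      conormalSymbol ψ y = a * B (ψ y, y) (coframe ψ y 0) (coframe ψ y 0)) :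
    ∀ᶠ p in 𝓝 (ψ x, x),
      AnalyticAt ℝ ((remainderEquation ψ a B ℓ c).solution ∘ flatten ψ) p ∧ (p.1 ≠ ψ p.2 →
        SolvesWaveAt B ℓ c (singularWave a ψ (remainderEquation ψ a B ℓ c).solution) p) := by
  set F := remainderEquation ψ a B ℓ c
  have hB' := analyticAt_comp_unflatten hψ hB
  have hcoeff : F.ForallCoeff (AnalyticAt ℝ · (0, x)) :=
    forallCoeff_analyticAt_waveRemainderEquation hψ hd hB' (analyticAt_comp_unflatten hψ hℓ)
      (analyticAt_comp_unflatten hψ hc)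
  have hdir (i : Fin n) : ‖F.dir i‖ ≤ 1 := (norm_coordDir i).le
  have hW := FuchsianEquation.analyticAt_solution hdir hcoeff
  have hquot := eventually_fst_mul_conormalQuotient (a := a) hψ hB' (by
    simpa only [Function.comp_apply, unflatten, zero_add] using hchar)
  have hflatten : Tendsto (flatten ψ) (𝓝 (ψ x, x)) (𝓝 (0, x)) := by
    simpa only [flatten, sub_self] using
      (analyticAt_flatten (p := (ψ x, x)) hψ).continuousAt.tendsto
  have hsnd : Tendsto Prod.snd (𝓝 (ψ x, x)) (𝓝 x) := continuousAt_snd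
  filter_upwards [hflatten.eventually hW.eventually_analyticAt,
    hflatten.eventually (FuchsianEquation.eventually_solution_eq hdir hcoeff),
    hflatten.eventually hquot, hsnd.eventually hψ.eventually_analyticAt,
    hsnd.eventually ((analyticAt_conormalSymbol hψ).continuousAt.eventually_ne hd)]
    with p hWp hsolution hquotp hψp hdp
  exact ⟨hWp.comp (analyticAt_flatten hψp), fun hp =>
    solvesWaveAt_singularWave hp hψp hdp hWp hquotp hsolution⟩

theorem eventually_conormalSymbol_eq {U : Set (ℝ × (Fin n → ℝ))} (hU : IsOpen U)
    (hψ : AnalyticAt ℝ ψ x) (hx : (ψ x, x) ∈ U) {f₂ : ℝ → (Fin n → ℝ) → ℝ → (Fin n → ℝ) → ℝ}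
    (hf₂ : ∀ t x τ ξ, f₂ t x τ ξ = B (t, x) (τ, ξ) (τ, ξ))
    (hcond : ∀ y, (ψ y, y) ∈ U →
      1 - ∑ i, gradp ψ y i ^ 2 = a * f₂ (ψ y) y (-1) (gradp ψ y)) :
    ∀ᶠ y in 𝓝 x, conormalSymbol ψ y = a * B (ψ y, y) (coframe ψ y 0) (coframe ψ y 0) := by
  have hgraph : ContinuousAt (fun y => (ψ y, y)) x := hψ.continuousAt.prodMk continuousAt_id
  filter_upwards [hψ.eventually_analyticAt, hgraph.eventually (hU.mem_nhds hx)] with y hψy hy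
  have hgrad : gradp ψ y = fun i => dirDeriv (coordDir i) ψ y :=
    funext fun i => gradp_eq_dirDeriv hψy i
  have hneg : ((-1 : ℝ), gradp ψ y) = -coframe ψ y 0 := by
    ext <;> simp [coframe, hgrad]
  have h := hcond y hy
  rw [hf₂, hneg, map_neg, map_neg, neg_apply, neg_neg] at h
  simpa only [hgrad, conormalSymbol] using h

end SingularSolution

theorem stmt8_general {n : ℕ} (U : Set (ℝ × (Fin n → ℝ))) (hU : IsOpen U)
    (f₂ f₁ f₀ : ℝ → (Fin n → ℝ) → ℝ → (Fin n → ℝ) → ℝ)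
    (hf₂ : HomogPoly 2 U f₂) (hf₁ : HomogPoly 1 U f₁) (hf₀ : HomogPoly 0 U f₀)
    (ψ : (Fin n → ℝ) → ℝ) (hψ : AnalyticOnNhd ℝ ψ {x | (ψ x, x) ∈ U}) (a : ℝ)
    (hcond : ∀ x, (ψ x, x) ∈ U →
      1 - ∑ i, gradp ψ x i ^ 2 ≠ 0 ∧
      1 - ∑ i, gradp ψ x i ^ 2 = a * f₂ (ψ x) x (-1) (gradp ψ x)) :
    ∃ Ω : Set (ℝ × (Fin n → ℝ)), IsOpen Ω ∧ {p ∈ U | p.1 = ψ p.2} ⊆ Ω ∧ Ω ⊆ U ∧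
      ∃ v : ℝ → (Fin n → ℝ) → ℝ,
        AnalyticOnNhd ℝ (fun p : ℝ × (Fin n → ℝ) => v p.1 p.2) Ω ∧
        SolvesWave f₂ f₁ f₀ (fun t x => -a * Real.log |t - ψ x| + v t x)
          (Ω ∩ {p | p.1 ≠ ψ p.2}) := by
  obtain ⟨B, hB, hf₂B⟩ := hf₂.exists_quadraticForm
  obtain ⟨ℓ, hℓ, hf₁ℓ⟩ := hf₁.exists_linearForm
  obtain ⟨c, hc, hf₀c⟩ := hf₀.exists_const
  set W := (remainderEquation ψ a B ℓ c).solution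
  set P : ℝ × (Fin n → ℝ) → Prop := fun p => p ∈ U ∧ AnalyticAt ℝ (W ∘ flatten ψ) p ∧
    (p.1 ≠ ψ p.2 → SolvesWaveAt B ℓ c (singularWave a ψ W) p)
  refine ⟨{p | ∀ᶠ q in 𝓝 p, P q}, isOpen_setOfPred_eventually_nhds, ?_,
    fun p hp => hp.self_of_nhds.1, fun t x => W (flatten ψ (t, x)),
    fun p hp => hp.self_of_nhds.2.1, fun t x htx => ?_⟩
  · rintro ⟨t, x⟩ ⟨hx, rfl : t = ψ x⟩
    have hsymbol : conormalSymbol ψ x ≠ 0 := by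
      simpa only [conormalSymbol, gradp_eq_dirDeriv (hψ x hx)] using (hcond x hx).1
    exact (hU.eventually_mem hx).and (eventually_solvesWaveAt_singularWave (hψ x hx) hsymbol
      (hB _ hx) (hℓ _ hx) (hc _ hx)
      (eventually_conormalSymbol_eq hU (hψ x hx) hx hf₂B fun y hy => (hcond y hy).2))
  · rw [hf₂B, hf₁ℓ, hf₀c]
    exact htx.1.self_of_nhds.2.2 htx.2

/-- Under the additional time-reversal condition `f₂(t,x;1,∇ψ) = f₂(t,x;-1,∇ψ)`, there
are singular solutions on the negative side `{t < ψ(x)}` of `Σ` of the form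
`-a log(ψ(x)-t) + v`, and together with the positive side there exist singular solutions
on both sides of the noncharacteristic hypersurface `Σ`. -/
theorem stmt8 {n : ℕ} (U : Set (ℝ × (Fin n → ℝ))) (hU : IsOpen U)
    (f₂ f₁ f₀ : ℝ → (Fin n → ℝ) → ℝ → (Fin n → ℝ) → ℝ)
    (hf₂ : HomogPoly 2 U f₂) (hf₁ : HomogPoly 1 U f₁) (hf₀ : HomogPoly 0 U f₀)
    (ψ : (Fin n → ℝ) → ℝ) (hψ : AnalyticOnNhd ℝ ψ {x | (ψ x, x) ∈ U})
    (a : ℝ) (ha : a ≠ 0)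
    (hcond : ∀ x, (ψ x, x) ∈ U →
      1 - ∑ i, gradp ψ x i ^ 2 ≠ 0 ∧
      1 - ∑ i, gradp ψ x i ^ 2 = a * f₂ (ψ x) x (-1) (gradp ψ x))
    (hsym : ∀ t x, f₂ t x 1 (gradp ψ x) = f₂ t x (-1) (gradp ψ x)) :
    ∃ Ω : Set (ℝ × (Fin n → ℝ)), IsOpen Ω ∧ {p ∈ U | p.1 = ψ p.2} ⊆ Ω ∧ Ω ⊆ U ∧
      (∃ v : ℝ → (Fin n → ℝ) → ℝ,
        AnalyticOnNhd ℝ (fun p : ℝ × (Fin n → ℝ) => v p.1 p.2) Ω ∧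
        SolvesWave f₂ f₁ f₀ (fun t x => -a * Real.log (ψ x - t) + v t x)
          (Ω ∩ {p | p.1 < ψ p.2})) ∧
      (∃ v' : ℝ → (Fin n → ℝ) → ℝ,
        AnalyticOnNhd ℝ (fun p : ℝ × (Fin n → ℝ) => v' p.1 p.2) Ω ∧
        SolvesWave f₂ f₁ f₀ (fun t x => -a * Real.log (t - ψ x) + v' t x)
          (Ω ∩ {p | ψ p.2 < p.1})) := by
  obtain ⟨Ω, hΩ, hgraph, hΩU, v, hv, hsolves⟩ :=
    stmt8_general U hU f₂ f₁ f₀ hf₂ hf₁ hf₀ ψ hψ a hcond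
  refine ⟨Ω, hΩ, hgraph, hΩU, ⟨v, hv, ?_⟩, v, hv, ?_⟩
  · have habs (t : ℝ) (x : Fin n → ℝ) : log |t - ψ x| = log (ψ x - t) := by
      rw [abs_sub_comm, log_abs]
    simp only [habs] at hsolves
    exact fun t x htx => hsolves t x ⟨htx.1, htx.2.ne⟩
  · simp only [log_abs] at hsolves
    exact fun t x htx => hsolves t x ⟨htx.1, htx.2.ne'⟩
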